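/- Let k ∈ {0,1}. Suppose m₀ is the unique maximizer of 𝑝̃ on [0,1], that L₁^{(ℓ)}(m₀) = 0 for all 0 ≤ ℓ ≤ 2k, and that L₁^{(2k+1)}(m₀) > 0. Set W = (M − N·m₀)/N^{(2k+1)/(2k+2)}, where M = ∑σ_i and σ is drawn from the weighted Curie–Weiss Gibbs measure, and let d = 2·L₁^{(2k+1)}(m₀)/((2k+2)!·L₂(m₀)). Let Z be a real random variable with probability density p(z) = c₁·exp(−d·z^{2k+2}), c₁ the normalizing constant. Then there exists a constant K independent of N such that sup_{z∈ℝ} |ℙ(W ≤ z) − ℙ(Z ≤ z)| ≤ K·N^{−1/(2k+2)} for all N ≥ 1. -/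

import Mathlib

open Real Finset MeasureTheory

noncomputable section

/-- Dimer configurations (matchings of the complete graph on `Fin N`), encoded as
involutions of `Fin N`: fixed points are monomers, 2-cycles are dimers. -/
abbrev Dimer (N : ℕ) := {f : Fin N → Fin N // ∀ i, f (f i) = i}

/-- The set of monomers (dimer-free vertices) of a dimer configuration. -/
def monomers {N : ℕ} (D : Dimer N) : Finset (Fin N) :=
  Finset.univ.filter fun i => D.1 i = i

/-- Monomer density `m(D) = |𝓜(D)|/N`. -/
def mDim {N : ℕ} (D : Dimer N) : ℝ := ((monomers D).card : ℝ) / N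

/-- The parameter `b = (log N)/2 + h - J`. -/
def bIMD (N : ℕ) (J h : ℝ) : ℝ := Real.log N / 2 + h - J

/-- The Gibbs weight `exp(-H(D)) = exp(N (a m(D)^2 + b m(D)))` with `a = J`. -/
def wDim (N : ℕ) (J h : ℝ) (D : Dimer N) : ℝ :=
  Real.exp (N * (J * mDim D ^ 2 + bIMD N J h * mDim D))

/-- The probability of an event `A` under the IMD Gibbs measure. -/
def probDim (N : ℕ) (J h : ℝ) (A : Dimer N → Prop) : ℝ :=
  (∑ D : Dimer N, Set.indicator {D | A D} (wDim N J h) D) / ∑ D : Dimer N, wDim N J h D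

/-- The conditional probability `ℙ(A | B)` under the IMD Gibbs measure. -/
def condProbDim (N : ℕ) (J h : ℝ) (A B : Dimer N → Prop) : ℝ :=
  (∑ D : Dimer N, Set.indicator {D | A D ∧ B D} (wDim N J h) D) /
    ∑ D : Dimer N, Set.indicator {D | B D} (wDim N J h) D

/-- `g(x) = (√(e^{4x} + 4 e^{2x}) - e^{2x})/2`. -/
def gFun (x : ℝ) : ℝ := (Real.sqrt (Real.exp (4*x) + 4 * Real.exp (2*x)) - Real.exp (2*x)) / 2

/-- `τ(x) = (2x-1)J + h`. -/
def tauFun (J h x : ℝ) : ℝ := (2*x - 1) * J + h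

/-- `𝑝̃(m) = -J m² - (1 - g(τ(m)) + log(1 - g(τ(m))))/2`. -/
def ptilde (J h m : ℝ) : ℝ :=
  -J * m^2 - (1 - gFun (tauFun J h m) + Real.log (1 - gFun (tauFun J h m))) / 2

/-- The CDF of a centered Gaussian with variance `v`, evaluated at `z`. -/
def gaussCDF (v : ℝ) (z : ℝ) : ℝ :=
  (ProbabilityTheory.gaussianReal 0 (Real.toNNReal v) (Set.Iic z)).toReal

/-- Spin configurations `Σ = {0,1}^N`. -/
abbrev Config (N : ℕ) := Fin N → Bool

/-- `𝓐(σ) = {i : σ_i = 1}`. -/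
def ASet {N : ℕ} (σ : Config N) : Finset (Fin N) := Finset.univ.filter fun i => σ i = true

/-- `M(σ) = ∑ σ_i`. -/
def Msum {N : ℕ} (σ : Config N) : ℕ := (ASet σ).card

/-- Magnetization `m(σ) = M(σ)/N`. -/
def mConf {N : ℕ} (σ : Config N) : ℝ := (Msum σ : ℝ) / N

/-- `D(σ)`: the number of dimer configurations `D` with `𝓜(D) = 𝓐(σ)`. -/
def Dcount (N : ℕ) (σ : Config N) : ℕ :=
  (Finset.univ.filter fun D : Dimer N => monomers D = ASet σ).card

/-- The weight `D(σ) exp(-H(σ))` of the weighted Curie–Weiss model. -/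
def wConf (N : ℕ) (J h : ℝ) (σ : Config N) : ℝ :=
  (Dcount N σ : ℝ) * Real.exp (N * (J * mConf σ ^ 2 + bIMD N J h * mConf σ))

/-- The probability of an event `A` under the weighted Curie–Weiss Gibbs measure. -/
def probConf (N : ℕ) (J h : ℝ) (A : Config N → Prop) : ℝ :=
  (∑ σ : Config N, Set.indicator {σ | A σ} (wConf N J h) σ) / ∑ σ : Config N, wConf N J h σ

/-- Expectation under the weighted Curie–Weiss Gibbs measure. -/
def EConf (N : ℕ) (J h : ℝ) (f : Config N → ℝ) : ℝ :=
  (∑ σ : Config N, wConf N J h σ * f σ) / ∑ σ : Config N, wConf N J h σ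

/-- `L₁(m) = 2(1-m)(m² - (1-m)e^{2τ(m)})/((1-m) + e^{2τ(m)})`. -/
def Lone (J h m : ℝ) : ℝ :=
  2*(1-m)*(m^2 - (1-m)*Real.exp (2 * tauFun J h m)) / ((1-m) + Real.exp (2 * tauFun J h m))

/-- `L₂(m) = 4(1-m)(m² + (1-m)e^{2τ(m)})/((1-m) + e^{2τ(m)})`. -/
def Ltwo (J h m : ℝ) : ℝ :=
  4*(1-m)*(m^2 + (1-m)*Real.exp (2 * tauFun J h m)) / ((1-m) + Real.exp (2 * tauFun J h m))

/-- The configuration obtained from `σ` by setting the spins at `u, v` to `s, t`. -/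
def upd {N : ℕ} (σ : Config N) (u v : Fin N) (s t : Bool) : Config N :=
  fun i => if i = u then s else if i = v then t else σ i

/-- The edges of the complete graph, enumerated as ordered pairs `u < v`. -/
def cEdges (N : ℕ) : Finset (Fin N × Fin N) := Finset.univ.filter fun p => p.1 < p.2

/-- The probability of resampling the pair of spins at `(u,v)` to `(s,t)`:
the conditional distribution of `(σ_u, σ_v)` given `(σ_i)_{i ≠ u,v}`. -/
def qCond (N : ℕ) (J h : ℝ) (σ : Config N) (u v : Fin N) (s t : Bool) : ℝ :=
  wConf N J h (upd σ u v s t) / ∑ st : Bool × Bool, wConf N J h (upd σ u v st.1 st.2)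

/-- `E[F(σ, σ') | σ]` for the exchangeable pair `(σ, σ')` obtained by resampling the
spins at a uniformly chosen edge. -/
def condE2 (N : ℕ) (J h : ℝ) (F : Config N → Config N → ℝ) (σ : Config N) : ℝ :=
  ((cEdges N).card : ℝ)⁻¹ * ∑ p ∈ cEdges N, ∑ st : Bool × Bool,
    qCond N J h σ p.1 p.2 st.1 st.2 * F σ (upd σ p.1 p.2 st.1 st.2)

/-- The weight of the Gibbs measure conditioned on the event `S`. -/
def wCond (N : ℕ) (J h : ℝ) (S : Config N → Prop) (σ : Config N) : ℝ :=
  Set.indicator {σ | S σ} (wConf N J h) σ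

/-- `ℙ_ℓ(A) = ℙ(A | S)`, probability under the conditioned Gibbs measure. -/
def probL (N : ℕ) (J h : ℝ) (S A : Config N → Prop) : ℝ :=
  (∑ σ : Config N, Set.indicator {σ | A σ} (wCond N J h S) σ) / ∑ σ : Config N, wCond N J h S σ

/-- Expectation under the conditioned Gibbs measure `ℙ(·|S)`. -/
def EL (N : ℕ) (J h : ℝ) (S : Config N → Prop) (f : Config N → ℝ) : ℝ :=
  (∑ σ : Config N, wCond N J h S σ * f σ) / ∑ σ : Config N, wCond N J h S σ

/-- Resampling probability for the conditioned measure `ℙ(·|S)`. -/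
def qCondL (N : ℕ) (J h : ℝ) (S : Config N → Prop) (σ : Config N) (u v : Fin N)
    (s t : Bool) : ℝ :=
  wCond N J h S (upd σ u v s t) / ∑ st : Bool × Bool, wCond N J h S (upd σ u v st.1 st.2)

/-- `E_ℓ[F(σ, σ') | σ]` for the exchangeable pair under the conditioned measure. -/
def condE2L (N : ℕ) (J h : ℝ) (S : Config N → Prop) (F : Config N → Config N → ℝ)
    (σ : Config N) : ℝ :=
  ((cEdges N).card : ℝ)⁻¹ * ∑ p ∈ cEdges N, ∑ st : Bool × Bool,
    qCondL N J h S σ p.1 p.2 st.1 st.2 * F σ (upd σ p.1 p.2 st.1 st.2)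

/-- The maximizer set `O` of `𝑝̃` on `[0,1]`. -/
def maxSet (J h : ℝ) : Set ℝ :=
  {x | x ∈ Set.Icc (0:ℝ) 1 ∧ ∀ y ∈ Set.Icc (0:ℝ) 1, ptilde J h y ≤ ptilde J h x}

end

/-!
The weight of a configuration depends only on its number of monomers, so the law of `M` is carried
by the levels `N % 2 + 2 j`, with explicit weights. By Stirling's formula the weight at density `m`
is `exp (N I(m))` up to a common factor and a slowly varying correction, with `I = levelRate`.
The derivative of `I` is `log (1 - L₁ / r) / 2` with `r = LoneCofactor` positive, and `L₂ = 4 r` at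
a zero of `L₁`; hence `I(m) - I(m₀) = -d (m - m₀) ^ (2 k + 2) + O((m - m₀) ^ (2 k + 3))`. Moreover
`I ≤ p̃ + 1 / 2`, with equality at `m₀`, so `m₀` is the unique maximizer of `I`.
With `ε = N ^ (-1 / (2 k + 2))`, the normalized weight at density `m₀ + ε x` is therefore
`exp (-d x ^ (2 k + 2))` up to an error `O(ε / (1 + x ^ 2))`. Comparing sums over this lattice of
mesh `O(ε)` with integrals gives the distribution function up to `O(ε)`.
-/

section LeadingTerm

open Asymptotics Filter Topology

/-- `f` has leading term `c (y - x) ^ q` at `x`: near `x` the two agree up to an error of order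
`q + 1`. The coefficient `c` may vanish. -/
def HasLeadingTerm (f : ℝ → ℝ) (x : ℝ) (q : ℕ) (c : ℝ) : Prop :=
  (fun y => f y - c * (y - x) ^ q) =O[𝓝 x] fun y => (y - x) ^ (q + 1)

variable {f φ u : ℝ → ℝ} {x b c : ℝ} {q : ℕ}

lemma isBigO_pow_sub_of_le {m n : ℕ} (h : m ≤ n) :
    (fun y : ℝ => (y - x) ^ n) =O[𝓝 x] fun y => (y - x) ^ m := by
  have hb : (fun y : ℝ => (y - x) ^ (n - m)) =O[𝓝 x] fun _ => (1 : ℝ) :=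
    (show ContinuousAt (fun y : ℝ => (y - x) ^ (n - m)) x by fun_prop).tendsto.isBigO_one ℝ
  refine (hb.mul (isBigO_refl (fun y => (y - x) ^ m) _)).congr (fun y => ?_) fun y => one_mul _
  rw [← pow_add, Nat.sub_add_cancel h]

lemma HasLeadingTerm.isBigO (hf : HasLeadingTerm f x q c) : f =O[𝓝 x] fun y => (y - x) ^ q := by
  refine ((hf.trans (isBigO_pow_sub_of_le q.le_succ)).add
    (isBigO_const_mul_self c (fun y => (y - x) ^ q) _)).congr_left fun y => ?_
  ring

lemma HasLeadingTerm.exists_abs_sub_le (hf : HasLeadingTerm f x q c) :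
    ∃ δ > 0, ∃ C ≥ 0, ∀ y, |y - x| < δ → |f y - c * (y - x) ^ q| ≤ C * |y - x| ^ (q + 1) := by
  obtain ⟨C, hC, hbound⟩ := hf.exists_nonneg
  obtain ⟨δ, hδ, hball⟩ := Metric.eventually_nhds_iff.mp hbound.bound
  refine ⟨δ, hδ, C, hC, fun y hy => ?_⟩
  simpa only [Real.norm_eq_abs, abs_pow] using hball hy

lemma hasLeadingTerm_of_analyticAt (hf : AnalyticAt ℝ f x)
    (hder : ∀ l < q, iteratedDeriv l f x = 0) :
    HasLeadingTerm f x q (iteratedDeriv q f x / q.factorial) := by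
  have hsub : Tendsto (fun y => y - x) (𝓝 x) (𝓝 0) := by
    simpa [ContinuousAt] using (show ContinuousAt (fun y : ℝ => y - x) x by fun_prop)
  have htaylor := (hf.hasFPowerSeriesAt.isBigO_sub_partialSum_pow (q + 1)).comp_tendsto hsub
  refine (htaylor.congr_left fun y => ?_).trans (.of_norm_right ?_)
  · simp only [Function.comp_apply, add_sub_cancel, FormalMultilinearSeries.partialSum]
    rw [Finset.sum_range_succ, Finset.sum_eq_zero]
    · simp [mul_comm]
    · intro l hl
      simp [hder l (Finset.mem_range.mp hl)]
  · exact (isBigO_refl _ _).congr_left fun y => by simp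

lemma HasLeadingTerm.mul (hf : HasLeadingTerm f x q c) (hu : DifferentiableAt ℝ u x) :
    HasLeadingTerm (fun y => f y * u y) x q (c * u x) := by
  have hvar : (fun y => f y * (u y - u x)) =O[𝓝 x] fun y => (y - x) ^ (q + 1) := by
    simpa only [pow_succ] using hf.isBigO.mul hu.isBigO_sub
  refine (hvar.add (hf.const_mul_left (u x))).congr_left fun y => ?_
  ring

lemma HasLeadingTerm.comp (hφ : HasLeadingTerm φ 0 1 b) (hf : HasLeadingTerm f x q c)
    (hq : q ≠ 0) : HasLeadingTerm (fun y => φ (f y)) x q (b * c) := by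
  have hf_zero : Tendsto f (𝓝 x) (𝓝 0) := by
    refine hf.isBigO.trans_tendsto ?_
    simpa [ContinuousAt, hq] using (show ContinuousAt (fun y : ℝ => (y - x) ^ q) x by fun_prop)
  have hφf : (fun y => φ (f y) - b * f y) =O[𝓝 x] fun y => (y - x) ^ (q + 1) := by
    have hsq : (fun y => f y ^ 2) =O[𝓝 x] fun y => (y - x) ^ (q * 2) := by
      simpa only [pow_mul] using hf.isBigO.pow 2
    refine ((hφ.comp_tendsto hf_zero).congr_left fun y => ?_).trans
      (((isBigO_refl _ _).congr_left fun y => ?_).trans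
        (hsq.trans (isBigO_pow_sub_of_le (by omega))))
    · simp
    · simp
  refine (hφf.add (hf.const_mul_left b)).congr_left fun y => ?_
  ring

lemma HasLeadingTerm.congr' {g : ℝ → ℝ} (hf : HasLeadingTerm f x q c) (h : f =ᶠ[𝓝 x] g) :
    HasLeadingTerm g x q c := by
  refine IsBigO.congr' hf ?_ .rfl
  filter_upwards [h] with y hy
  rw [hy]

lemma HasLeadingTerm.primitive {F : ℝ → ℝ} (hf : HasLeadingTerm f x q c)
    (hF : ∀ᶠ y in 𝓝 x, HasDerivAt F (f y) y) :
    HasLeadingTerm (fun y => F y - F x) x (q + 1) (c / (q + 1)) := by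
  obtain ⟨C, hC0, hC⟩ := IsBigO.exists_nonneg hf
  obtain ⟨δ, hδ, hball⟩ := Metric.eventually_nhds_iff_ball.mp (hC.bound.and hF)
  refine IsBigO.of_bound C (Metric.eventually_nhds_iff_ball.mpr ⟨δ, hδ, fun y hy => ?_⟩)
  set G : ℝ → ℝ := fun t => F t - c / (q + 1) * (t - x) ^ (q + 1)
  have hseg : ∀ t ∈ Set.uIcc x y, t ∈ Metric.ball x δ ∧ |t - x| ≤ |y - x| := fun t ht => by
    have htx := Set.abs_sub_left_of_mem_uIcc ht
    exact ⟨(htx.trans_lt hy : |t - x| < δ), htx⟩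
  have hG : ∀ t ∈ Set.uIcc x y, HasDerivAt G (f t - c * (t - x) ^ q) t := fun t ht => by
    have hpow := (((hasDerivAt_id t).sub_const x).pow (q + 1)).const_mul (c / (q + 1))
    refine (((hball t (hseg t ht).1).2.sub hpow)).congr_deriv ?_
    have : (q : ℝ) + 1 ≠ 0 := by positivity
    simp
    field_simp
  have hmvt := (convex_uIcc x y).norm_image_sub_le_of_norm_hasDerivWithin_le
    (C := C * |y - x| ^ (q + 1)) (fun t ht => (hG t ht).hasDerivWithinAt) (fun t ht => ?_)
    Set.left_mem_uIcc Set.right_mem_uIcc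
  · simpa [G, pow_succ, mul_assoc, sub_right_comm] using hmvt
  · have hbound := (hball t (hseg t ht).1).1
    rw [norm_pow, Real.norm_eq_abs (t - x)] at hbound
    refine hbound.trans ?_
    gcongr C * ?_ ^ _
    exact (hseg t ht).2

end LeadingTerm

section LatticeSum

lemma abs_sum_mul_sub_integral_le {f w : ℝ → ℝ} (hf : Continuous f) (hw : Continuous w)
    {x a : ℕ → ℝ} (hx : Monotone x) {n : ℕ}
    (ha : ∀ j < n, ∀ t ∈ Set.Ioc (x j) (x (j + 1)), |a j - f t| ≤ w t) :
    |∑ j ∈ range n, (x (j + 1) - x j) * a j - ∫ t in x 0..x n, f t| ≤ ∫ t in x 0..x n, w t := by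
  have hcell : ∀ j < n, |(x (j + 1) - x j) * a j - ∫ t in x j..x (j + 1), f t| ≤
      ∫ t in x j..x (j + 1), w t := fun j hj => by
    rw [← smul_eq_mul, ← intervalIntegral.integral_const, ← intervalIntegral.integral_sub
      (by simp) (hf.intervalIntegrable _ _), ← Real.norm_eq_abs]
    exact intervalIntegral.norm_integral_le_of_norm_le (hx j.le_succ)
      (.of_forall (ha j hj)) (hw.intervalIntegrable _ _)
  have hadd : ∀ {g : ℝ → ℝ}, Continuous g →
      ∑ j ∈ range n, ∫ t in x j..x (j + 1), g t = ∫ t in x 0..x n, g t := fun hg =>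
    intervalIntegral.sum_integral_adjacent_intervals (μ := volume)
      fun _ _ => hg.intervalIntegrable _ _
  rw [← hadd hf, ← hadd hw, ← sum_sub_distrib]
  exact (abs_sum_le_sum_abs _ _).trans (sum_le_sum fun j hj => hcell j (mem_range.mp hj))

lemma exists_initial_segment {x : ℕ → ℝ} (hx : Monotone x) (L : ℕ) (z : ℝ) :
    ∃ n ≤ L + 1, ∀ j ≤ L, x j ≤ z ↔ j < n := by
  by_cases h : ∃ j, z < x j ∧ j ≤ L
  · classical
    refine ⟨Nat.find h, (Nat.find_spec h).2.trans L.le_succ, fun j hj =>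
      ⟨fun hjz => ?_, fun hjn => ?_⟩⟩
    · by_contra hcon
      exact ((Nat.find_spec h).1.trans_le (hx (not_lt.mp hcon))).not_ge hjz
    · by_contra hcon
      exact Nat.find_min h hjn ⟨not_le.mp hcon, hj⟩
  · push Not at h
    refine ⟨L + 1, le_rfl, fun j hj => ⟨fun _ => Nat.lt_succ_of_le hj, fun _ => ?_⟩⟩
    by_contra hcon
    exact (h j (not_le.mp hcon)).not_ge hj

lemma abs_div_sub_div_le {a b a' b' e : ℝ} (ha : 0 ≤ a) (hab : a ≤ b) (hb : 0 < b) (hb' : 0 < b')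
    (ha' : |a - a'| ≤ e) (hbb' : |b - b'| ≤ e) : |a / b - a' / b'| ≤ 2 * e / b' := by
  have hq0 : 0 ≤ a / b := by positivity
  have hq1 : a / b ≤ 1 := (div_le_one hb).mpr hab
  have hsplit : a / b - a' / b' = ((a - a') - a / b * (b - b')) / b' := by
    field_simp
    ring
  rw [hsplit, abs_div, abs_of_pos hb']
  gcongr
  calc |(a - a') - a / b * (b - b')| ≤ |a - a'| + |a / b * (b - b')| := abs_sub _ _
    _ ≤ e + 1 * e := by
        rw [abs_mul, abs_of_nonneg hq0]
        gcongr
    _ = 2 * e := by ring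

lemma abs_sum_ite_div_sum_sub_le {F : ℝ → ℝ} {I e : ℝ} (hF : Monotone F) (hF_nonneg : ∀ z, 0 ≤ F z)
    (hF_le : ∀ z, F z ≤ I) (hI : 0 < I) {x a : ℕ → ℝ} (hx : Monotone x) (ha : ∀ j, 0 < a j) {L : ℕ}
    (hsum : ∀ n ≤ L + 1, |∑ j ∈ range n, a j - (F (x n) - F (x 0))| ≤ e)
    (hstep : ∀ j, F (x (j + 1)) - F (x j) ≤ e) (hleft : F (x 0) ≤ e) (hright : I - F (x L) ≤ e)
    (z : ℝ) :
    |(∑ j ∈ range (L + 1), if x j ≤ z then a j else 0) / ∑ j ∈ range (L + 1), a j - F z / I| ≤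
      2 * (3 * e) / I := by
  obtain ⟨n, hn, hnz⟩ := exists_initial_segment hx L z
  have hpartial : (∑ j ∈ range (L + 1), if x j ≤ z then a j else 0) = ∑ j ∈ range n, a j := by
    rw [← sum_filter]
    congr 1
    ext j
    simp only [mem_filter, mem_range]
    exact ⟨fun h => (hnz j (by omega)).mp h.2, fun h => ⟨by omega, (hnz j (by omega)).mpr h⟩⟩
  have hlast : I - F (x (L + 1)) ≤ e := by linarith [hF (hx L.le_succ)]
  have hcut_le : F z ≤ F (x n) + e := by
    rcases hn.lt_or_eq with hlt | rfl
    · have := hF (not_le.mp fun h => ((hnz n (by omega)).mp h).false).le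
      linarith [(hF_nonneg (x 0)).trans hleft]
    · linarith [hF_le z]
  have hcut_ge : F (x n) ≤ F z + e := by
    rcases n with _ | n
    · linarith [hF_nonneg z]
    · linarith [hF ((hnz n (by omega)).mpr n.lt_succ_self), hstep n]
  rw [hpartial]
  refine abs_div_sub_div_le (sum_nonneg fun j _ => (ha j).le)
    (sum_le_sum_of_subset_of_nonneg (range_mono hn) fun j _ _ => (ha j).le)
    (sum_pos (fun j _ => ha j) nonempty_range_add_one) hI ?_ ?_
  · have := abs_le.mp (hsum n hn)
    rw [abs_le]
    constructor <;> linarith [hF_nonneg (x 0)]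
  · have := abs_le.mp (hsum (L + 1) le_rfl)
    rw [abs_le]
    constructor <;> linarith [hF_nonneg (x 0), hF_le (x (L + 1))]

end LatticeSum

section CauchyDomination

lemma arctan_le_self {y : ℝ} (hy : 0 ≤ y) : arctan y ≤ y := by
  simpa using le_tan (arctan_nonneg.mpr hy) (arctan_lt_pi_div_two y)

lemma pi_div_two_sub_arctan_le_inv {T : ℝ} (hT : 0 < T) : π / 2 - arctan T ≤ T⁻¹ := by
  rw [← arctan_inv_of_pos hT]
  exact arctan_le_self (by positivity)

lemma continuous_inv_one_add_sq : Continuous fun t : ℝ => (1 + t ^ 2)⁻¹ :=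
  .inv₀ (by fun_prop) fun t => by positivity

lemma intervalIntegral_inv_one_add_sq_le_pi (a b : ℝ) : ∫ t in a..b, (1 + t ^ 2)⁻¹ ≤ π := by
  rw [integral_inv_one_add_sq]
  linarith [arctan_lt_pi_div_two b, neg_pi_div_two_lt_arctan a]

lemma inv_one_add_sq_le_of_abs_sub_le {s t : ℝ} (hst : |s - t| ≤ 2) :
    (1 + s ^ 2)⁻¹ ≤ 9 * (1 + t ^ 2)⁻¹ := by
  rw [← div_eq_mul_inv, inv_le_comm₀ (by positivity) (by positivity), inv_div,
    div_le_iff₀ (by norm_num)]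
  have : (t - s) ^ 2 ≤ 2 ^ 2 := by rwa [sq_le_sq, abs_sub_comm, abs_two]
  nlinarith [sq_nonneg (2 * s - (t - s)), sq_nonneg s]

/-- Nonnegative densities which, together with their increments over distances at most `2`, are
dominated by the Cauchy density. This makes lattice sums of `f` uniformly close to integrals and
bounds the tails of `f`. -/
structure CauchyDominated (f : ℝ → ℝ) (A : ℝ) : Prop where
  nonneg : ∀ t, 0 ≤ f t
  le : ∀ t, f t ≤ A * (1 + t ^ 2)⁻¹
  increment_le : ∀ s t, |s - t| ≤ 2 → |f s - f t| ≤ A * |s - t| * (1 + t ^ 2)⁻¹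

namespace CauchyDominated

variable {f : ℝ → ℝ} {A : ℝ}

lemma const_nonneg (hf : CauchyDominated f A) : 0 ≤ A := by
  simpa using (hf.nonneg 0).trans (hf.le 0)

lemma continuous (hf : CauchyDominated f A) : Continuous f := by
  refine continuous_iff_continuousAt.mpr fun t => continuousAt_of_locally_lipschitz two_pos
    (A * (1 + t ^ 2)⁻¹) fun s hs => ?_
  rw [Real.dist_eq, Real.dist_eq] at *
  linarith [hf.increment_le s t hs.le]

lemma integrable (hf : CauchyDominated f A) : Integrable f :=
  (integrable_inv_one_add_sq.const_mul A).mono' hf.continuous.aestronglyMeasurable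
    (.of_forall fun t => by simpa only [Real.norm_of_nonneg (hf.nonneg t)] using hf.le t)

lemma le_const (hf : CauchyDominated f A) (t : ℝ) : f t ≤ A :=
  (hf.le t).trans (mul_le_of_le_one_right hf.const_nonneg
    (inv_le_one_of_one_le₀ (by linarith [sq_nonneg t])))

lemma integral_Iic_sub (hf : CauchyDominated f A) (a b : ℝ) :
    (∫ t in Set.Iic b, f t) - ∫ t in Set.Iic a, f t = ∫ t in a..b, f t :=
  intervalIntegral.integral_Iic_sub_Iic hf.integrable.integrableOn hf.integrable.integrableOn

lemma monotone_integral_Iic (hf : CauchyDominated f A) :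
    Monotone fun z => ∫ t in Set.Iic z, f t := fun a b hab => by
  rw [← sub_nonneg, hf.integral_Iic_sub]
  exact intervalIntegral.integral_nonneg hab fun t _ => hf.nonneg t

lemma integral_Iic_sub_le (hf : CauchyDominated f A) {a b : ℝ} (hab : a ≤ b) :
    (∫ t in Set.Iic b, f t) - ∫ t in Set.Iic a, f t ≤ A * (b - a) := by
  rw [hf.integral_Iic_sub]
  simpa [mul_comm] using intervalIntegral.integral_mono_on (μ := volume) hab
    (hf.continuous.intervalIntegrable _ _) intervalIntegrable_const fun t _ => hf.le_const t

lemma integral_Iic_neg_le (hf : CauchyDominated f A) {T : ℝ} (hT : 0 < T) :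
    ∫ t in Set.Iic (-T), f t ≤ A / T := by
  calc ∫ t in Set.Iic (-T), f t ≤ ∫ t in Set.Iic (-T), A * (1 + t ^ 2)⁻¹ :=
        setIntegral_mono hf.integrable.integrableOn
          (integrable_inv_one_add_sq.const_mul A).integrableOn hf.le
    _ = A * (π / 2 - arctan T) := by
        rw [integral_const_mul, integral_Iic_inv_one_add_sq, arctan_neg]
        ring
    _ ≤ A / T := mul_le_mul_of_nonneg_left (pi_div_two_sub_arctan_le_inv hT) hf.const_nonneg

lemma integral_sub_integral_Iic_le (hf : CauchyDominated f A) {T : ℝ} (hT : 0 < T) :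
    (∫ t, f t) - ∫ t in Set.Iic T, f t ≤ A / T := by
  calc (∫ t, f t) - ∫ t in Set.Iic T, f t = ∫ t in Set.Ioi T, f t :=
        sub_eq_of_eq_add' (intervalIntegral.integral_Iic_add_Ioi
          hf.integrable.integrableOn hf.integrable.integrableOn).symm
    _ ≤ ∫ t in Set.Ioi T, A * (1 + t ^ 2)⁻¹ :=
        setIntegral_mono hf.integrable.integrableOn
          (integrable_inv_one_add_sq.const_mul A).integrableOn hf.le
    _ = A * (π / 2 - arctan T) := by rw [integral_const_mul, integral_Ioi_inv_one_add_sq]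
    _ ≤ A / T := mul_le_mul_of_nonneg_left (pi_div_two_sub_arctan_le_inv hT) hf.const_nonneg

lemma abs_mul_sum_sub_integral_le (hf : CauchyDominated f A) {B ε Δ : ℝ} (hΔ : 0 ≤ Δ)
    (hΔ_two : Δ ≤ 2) (hΔ_le : Δ ≤ 2 * ε) {x a : ℕ → ℝ} (hx : ∀ j, x (j + 1) = x j + Δ) {n : ℕ}
    (ha : ∀ j < n, |a j - f (x j)| ≤ B * ε * (1 + x j ^ 2)⁻¹) (hB : 0 ≤ B) :
    |Δ * ∑ j ∈ range n, a j - ∫ t in x 0..x n, f t| ≤ (9 * B + 2 * A) * π * ε := by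
  have hx_mono : Monotone x := monotone_nat_of_le_succ fun j => by linarith [hx j]
  have hε : 0 ≤ ε := by linarith
  have hA := hf.const_nonneg
  have hcell : ∀ j < n, ∀ t ∈ Set.Ioc (x j) (x (j + 1)),
      |a j - f t| ≤ (9 * B + 2 * A) * ε * (1 + t ^ 2)⁻¹ := fun j hj t ht => by
    have hdist : |x j - t| ≤ Δ := by
      rw [hx] at ht
      rw [abs_le]
      constructor <;> linarith [ht.1, ht.2]
    calc |a j - f t| ≤ |a j - f (x j)| + |f (x j) - f t| := abs_sub_le _ _ _
      _ ≤ B * ε * (9 * (1 + t ^ 2)⁻¹) + A * (2 * ε) * (1 + t ^ 2)⁻¹ := by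
          refine add_le_add ((ha j hj).trans ?_)
            ((hf.increment_le _ _ (hdist.trans hΔ_two)).trans ?_)
          · gcongr
            exact inv_one_add_sq_le_of_abs_sub_le (hdist.trans hΔ_two)
          · gcongr
            exact hdist.trans hΔ_le
      _ = (9 * B + 2 * A) * ε * (1 + t ^ 2)⁻¹ := by ring
  have hsum := abs_sum_mul_sub_integral_le hf.continuous (continuous_inv_one_add_sq.const_mul _)
    hx_mono hcell
  simp only [hx, add_sub_cancel_left, ← mul_sum, intervalIntegral.integral_const_mul] at hsum
  calc _ ≤ (9 * B + 2 * A) * ε * ∫ t in x 0..x n, (1 + t ^ 2)⁻¹ := hsum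
    _ ≤ (9 * B + 2 * A) * ε * π := by
        gcongr
        exact intervalIntegral_inv_one_add_sq_le_pi _ _
    _ = (9 * B + 2 * A) * π * ε := by ring

theorem exists_abs_sum_ite_div_sum_sub_le (hf : CauchyDominated f A) (hI : 0 < ∫ t, f t)
    {B c : ℝ} (hB : 0 ≤ B) (hc : 0 < c) :
    ∃ K, ∀ {ε Δ Z : ℝ} {x a : ℕ → ℝ} {L : ℕ}, 0 < ε → 0 < Δ → Δ ≤ 2 → Δ ≤ 2 * ε → 0 < Z →
      (∀ j, x (j + 1) = x j + Δ) → (∀ j, 0 < a j) →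
      (∀ j ≤ L, |a j / Z - f (x j)| ≤ B * ε * (1 + x j ^ 2)⁻¹) →
      x 0 ≤ ε - c / ε → c / ε ≤ x L → ∀ z,
      |(∑ j ∈ range (L + 1), if x j ≤ z then a j else 0) / ∑ j ∈ range (L + 1), a j -
        (∫ t in Set.Iic z, f t) / ∫ t, f t| ≤ K * ε := by
  refine ⟨2 * (3 * ((9 * B + 2 * A) * π + 2 * A + A / c)) / ∫ t, f t, ?_⟩
  intro ε Δ Z x a L hε hΔ hΔ_two hΔ_le hZ hx ha hlocal hx0 hxL z
  have hA := hf.const_nonneg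
  have hx_mono : Monotone x := monotone_nat_of_le_succ fun j => by linarith [hx j]
  have hF_mono := hf.monotone_integral_Iic
  have hΔZ : 0 < Δ / Z := by positivity
  have hscale : ∀ n, ∑ j ∈ range n, Δ / Z * a j = Δ * ∑ j ∈ range n, a j / Z := fun n => by
    rw [mul_sum]
    exact sum_congr rfl fun j _ => by ring
  have hcε : 0 < c / ε := by positivity
  have htail : A / (c / ε) = A / c * ε := by field_simp
  have hsum_nonneg : 0 ≤ (9 * B + 2 * A) * π * ε := by positivity
  have hA_nonneg : 0 ≤ A * ε := by positivity
  have hAc_nonneg : 0 ≤ A / c * ε := by positivity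
  have hratio := abs_sum_ite_div_sum_sub_le (e := ((9 * B + 2 * A) * π + 2 * A + A / c) * ε)
    hF_mono (fun z => setIntegral_nonneg measurableSet_Iic fun t _ => hf.nonneg t)
    (fun z => setIntegral_le_integral hf.integrable (.of_forall hf.nonneg)) hI hx_mono
    (fun j => mul_pos hΔZ (ha j)) (L := L) ?_ ?_ ?_ ?_ z
  · simp only [← mul_ite_zero, ← mul_sum] at hratio
    rw [mul_div_mul_left _ _ hΔZ.ne'] at hratio
    exact hratio.trans_eq (by ring)
  · intro n hn
    have := hf.abs_mul_sum_sub_integral_le hΔ.le hΔ_two hΔ_le hx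
      (fun j hj => hlocal j (by omega)) hB (n := n)
    rw [hscale, hf.integral_Iic_sub]
    linarith
  · intro j
    have := hf.integral_Iic_sub_le (hx_mono j.le_succ)
    rw [hx, add_sub_cancel_left, ← hx] at this
    linarith [mul_le_mul_of_nonneg_left hΔ_le hA]
  · have hstep := hf.integral_Iic_sub_le (a := -(c / ε)) (b := ε - c / ε) (by linarith)
    linarith [hF_mono hx0, hf.integral_Iic_neg_le hcε]
  · linarith [hF_mono hxL, hf.integral_sub_integral_Iic_le hcε]

end CauchyDominated

end CauchyDomination

section ExpNegPow

variable {p : ℕ} {d : ℝ}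

lemma abs_le_pow_add_one (hp : Even p) (hp0 : p ≠ 0) (x : ℝ) : |x| ≤ x ^ p + 1 := by
  rw [← hp.pow_abs]
  rcases le_total |x| 1 with h | h
  · exact h.trans (le_add_of_nonneg_left (by positivity))
  · linarith [le_self_pow₀ h hp0]

lemma exists_pow_mul_exp_neg_le (hp : Even p) (hp0 : p ≠ 0) (hd : 0 < d) (n : ℕ) :
    ∃ C > 0, ∀ x : ℝ, (|x| + 2) ^ n * rexp (-(d * x ^ p)) ≤ C := by
  refine ⟨n.factorial / d ^ n * rexp (3 * d), by positivity, fun x => ?_⟩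
  have hpow : (|x| + 2) ^ n ≤ n.factorial / d ^ n * rexp (d * (|x| + 2)) := by
    have := pow_div_factorial_le_exp (d * (|x| + 2)) (by positivity) n
    rw [div_le_iff₀ (by positivity), mul_pow] at this
    rw [div_mul_eq_mul_div, le_div_iff₀ (by positivity)]
    linarith
  calc (|x| + 2) ^ n * rexp (-(d * x ^ p))
      ≤ n.factorial / d ^ n * rexp (d * (|x| + 2)) * rexp (-(d * x ^ p)) := by gcongr
    _ = n.factorial / d ^ n * rexp (d * (|x| + 2) + -(d * x ^ p)) := by
        rw [exp_add, mul_assoc]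
    _ ≤ n.factorial / d ^ n * rexp (3 * d) := by
        gcongr
        nlinarith [abs_le_pow_add_one hp hp0 x]

lemma exists_pow_mul_exp_neg_le_inv (hp : Even p) (hp0 : p ≠ 0) (hd : 0 < d) (n : ℕ) :
    ∃ C > 0, ∀ x : ℝ, (|x| + 2) ^ n * rexp (-(d * x ^ p)) ≤ C * (1 + x ^ 2)⁻¹ := by
  obtain ⟨C, hC, hbound⟩ := exists_pow_mul_exp_neg_le hp hp0 hd (n + 2)
  refine ⟨C, hC, fun x => ?_⟩
  have hsq : 1 + x ^ 2 ≤ (|x| + 2) ^ 2 := by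
    rw [← sq_abs x]
    nlinarith [abs_nonneg x]
  rw [← div_eq_mul_inv, le_div_iff₀ (by positivity)]
  calc (|x| + 2) ^ n * rexp (-(d * x ^ p)) * (1 + x ^ 2)
      ≤ (|x| + 2) ^ n * rexp (-(d * x ^ p)) * (|x| + 2) ^ 2 := by gcongr
    _ = (|x| + 2) ^ (n + 2) * rexp (-(d * x ^ p)) := by ring
    _ ≤ C := hbound x

lemma exists_abs_exp_neg_sub_exp_neg_le (hp : Even p) (hp0 : p ≠ 0) (hd : 0 < d) :
    ∃ C, ∀ s t : ℝ, |s - t| ≤ 2 →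
      |rexp (-(d * s ^ p)) - rexp (-(d * t ^ p))| ≤ C * |s - t| * (1 + t ^ 2)⁻¹ := by
  obtain ⟨C, hC, hbound⟩ := exists_pow_mul_exp_neg_le_inv hp hp0 hd (p - 1)
  refine ⟨d * p * (C * 9), fun s t hst => ?_⟩
  have hderiv (x : ℝ) : HasDerivAt (fun x => rexp (-(d * x ^ p)))
      (rexp (-(d * x ^ p)) * -(d * (p * x ^ (p - 1)))) x :=
    (((hasDerivAt_pow p x).const_mul d).neg).exp
  have hderiv_le : ∀ x ∈ Set.uIcc t s, ‖rexp (-(d * x ^ p)) * -(d * (p * x ^ (p - 1)))‖ ≤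
      d * p * (C * 9) * (1 + t ^ 2)⁻¹ := fun x hx => by
    have hxt : |x - t| ≤ 2 := (Set.abs_sub_left_of_mem_uIcc hx).trans hst
    calc ‖rexp (-(d * x ^ p)) * -(d * (p * x ^ (p - 1)))‖
        = d * p * (|x| ^ (p - 1) * rexp (-(d * x ^ p))) := by
          simp only [norm_mul, norm_neg, norm_pow, Real.norm_eq_abs, abs_exp, abs_of_pos hd,
            Nat.abs_cast]
          ring
      _ ≤ d * p * ((|x| + 2) ^ (p - 1) * rexp (-(d * x ^ p))) := by gcongr; linarith
      _ ≤ d * p * (C * (1 + x ^ 2)⁻¹) := mul_le_mul_of_nonneg_left (hbound x) (by positivity)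
      _ ≤ d * p * (C * (9 * (1 + t ^ 2)⁻¹)) := by
          gcongr
          exact inv_one_add_sq_le_of_abs_sub_le hxt
      _ = d * p * (C * 9) * (1 + t ^ 2)⁻¹ := by ring
  have hmvt := (convex_uIcc t s).norm_image_sub_le_of_norm_hasDerivWithin_le
    (fun x _ => (hderiv x).hasDerivWithinAt) hderiv_le Set.left_mem_uIcc Set.right_mem_uIcc
  rw [Real.norm_eq_abs, Real.norm_eq_abs] at hmvt
  linarith

lemma exists_cauchyDominated_exp_neg (hp : Even p) (hp0 : p ≠ 0) (hd : 0 < d) :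
    ∃ A, CauchyDominated (fun t => rexp (-(d * t ^ p))) A := by
  obtain ⟨C, -, hC⟩ := exists_pow_mul_exp_neg_le_inv hp hp0 hd 0
  obtain ⟨C', hC'⟩ := exists_abs_exp_neg_sub_exp_neg_le hp hp0 hd
  refine ⟨max C C', fun t => (exp_pos _).le, fun t => ?_, fun s t hst => (hC' s t hst).trans ?_⟩
  · calc rexp (-(d * t ^ p)) ≤ C * (1 + t ^ 2)⁻¹ := by simpa using hC t
      _ ≤ max C C' * (1 + t ^ 2)⁻¹ := by gcongr; exact le_max_left _ _
  · gcongr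
    exact le_max_right _ _

lemma abs_exp_sub_one_le_mul_exp_abs (x : ℝ) : |rexp x - 1| ≤ |x| * rexp |x| := by
  have hlower := add_one_le_exp x
  have hupper : rexp x - 1 ≤ x * rexp x := by
    have := mul_le_mul_of_nonneg_right (add_one_le_exp (-x)) (exp_pos x).le
    rw [← exp_add, neg_add_cancel, exp_zero] at this
    linarith
  have hmono : x * rexp x ≤ |x| * rexp |x| := by
    gcongr <;> exact le_abs_self x
  have hone : |x| * 1 ≤ |x| * rexp |x| := by
    gcongr
    exact one_le_exp (abs_nonneg x)
  rw [abs_le]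
  constructor <;> linarith [neg_abs_le x]

lemma exists_abs_exp_neg_add_sub_le (hp : Even p) (hp0 : p ≠ 0) (hd : 0 < d) (n : ℕ) {C : ℝ}
    (hC : 0 ≤ C) :
    ∃ K ≥ 0, ∀ {ε x X : ℝ}, 0 ≤ ε → |X| ≤ C * ε * (|x| + 2) ^ n → |X| ≤ d / 2 * x ^ p + C →
      |rexp (-(d * x ^ p) + X) - rexp (-(d * x ^ p))| ≤ K * ε * (1 + x ^ 2)⁻¹ := by
  obtain ⟨C', hC', hbound⟩ := exists_pow_mul_exp_neg_le_inv hp hp0 (half_pos hd) n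
  refine ⟨C * rexp C * C', by positivity, fun {ε x X} hε hXε hXC => ?_⟩
  calc |rexp (-(d * x ^ p) + X) - rexp (-(d * x ^ p))|
      = rexp (-(d * x ^ p)) * |rexp X - 1| := by
        rw [exp_add, ← mul_sub_one, abs_mul, abs_exp]
    _ ≤ rexp (-(d * x ^ p)) * (C * ε * (|x| + 2) ^ n * rexp (d / 2 * x ^ p + C)) := by
        gcongr
        refine (abs_exp_sub_one_le_mul_exp_abs X).trans ?_
        gcongr
    _ = C * rexp C * ε * ((|x| + 2) ^ n * rexp (-(d / 2 * x ^ p))) := by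
        rw [show -(d * x ^ p) = -(d / 2 * x ^ p) + -(d / 2 * x ^ p) by ring, exp_add, exp_add,
          exp_neg (d / 2 * x ^ p)]
        field_simp
    _ ≤ C * rexp C * ε * (C' * (1 + x ^ 2)⁻¹) :=
        mul_le_mul_of_nonneg_left (hbound x) (by positivity)
    _ = C * rexp C * C' * ε * (1 + x ^ 2)⁻¹ := by ring

lemma exists_exp_neg_le_of_le_abs (hp : Even p) (hp0 : p ≠ 0) (hd : 0 < d) {δ : ℝ} (hδ : 0 < δ) :
    ∃ K, ∀ {ε x : ℝ}, 0 < ε → δ ≤ |ε * x| →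
      rexp (-(d * x ^ p)) ≤ K * ε * (1 + x ^ 2)⁻¹ := by
  obtain ⟨A, -, hdecay⟩ := exists_pow_mul_exp_neg_le_inv hp hp0 hd 1
  refine ⟨A / δ, fun {ε x} hε hxδ => ?_⟩
  rw [abs_mul, abs_of_pos hε] at hxδ
  calc rexp (-(d * x ^ p)) ≤ ε * |x| / δ * rexp (-(d * x ^ p)) :=
        le_mul_of_one_le_left (exp_pos _).le ((one_le_div hδ).mpr hxδ)
    _ ≤ ε * (|x| + 2) ^ 1 / δ * rexp (-(d * x ^ p)) := by gcongr; linarith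
    _ = ε / δ * ((|x| + 2) ^ 1 * rexp (-(d * x ^ p))) := by ring
    _ ≤ ε / δ * (A * (1 + x ^ 2)⁻¹) := by gcongr ?_ * ?_; exact hdecay x
    _ = A / δ * ε * (1 + x ^ 2)⁻¹ := by ring

lemma sq_pow_le_mul_inv_one_add_sq (hp : Even p) (hp0 : p ≠ 0) {ε x : ℝ} (hε : 0 < ε)
    (hε1 : ε ≤ 1) (hx : |ε * x| ≤ 1) : (ε ^ p) ^ 2 ≤ ε * (2 * (1 + x ^ 2)⁻¹) := by
  have hsq : ε ^ 2 ≤ 2 * (1 + x ^ 2)⁻¹ := by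
    rw [← div_eq_mul_inv, le_div_iff₀ (by positivity)]
    linarith [(sq_le_one_iff_abs_le_one (ε * x)).mpr hx, pow_le_one₀ hε.le hε1 (n := 2)]
  have hp2 : 2 ≤ p := Nat.le_of_dvd hp0.bot_lt hp.two_dvd
  calc (ε ^ p) ^ 2 ≤ (ε ^ 2) ^ 2 := by
        have := pow_le_pow_of_le_one hε.le hε1 hp2
        gcongr
    _ = ε * (ε * ε ^ 2) := by ring
    _ ≤ ε * (2 * (1 + x ^ 2)⁻¹) :=
        mul_le_mul_of_nonneg_left ((mul_le_of_le_one_left (sq_nonneg ε) hε1).trans hsq) hε.le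

end ExpNegPow

section Stirling

open Filter Topology

/-- The error `log n! - (n log n - n)` of the leading-order Stirling approximation. -/
noncomputable def stirlingRemainder (n : ℕ) : ℝ := log n.factorial + negMulLog n + n

lemma stirlingRemainder_nonneg (n : ℕ) : 0 ≤ stirlingRemainder n := by
  rcases n.eq_zero_or_pos with rfl | hn
  · simp [stirlingRemainder]
  have := log_le_log (by positivity) (pow_div_factorial_le_exp n n.cast_nonneg n)
  rw [log_exp, log_div (by positivity) (by positivity), log_pow] at this
  rw [stirlingRemainder, negMulLog]
  linarith

lemma stirlingRemainder_eq {n : ℕ} (hn : n ≠ 0) :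
    stirlingRemainder n = log (Stirling.stirlingSeq n) + log (2 * n) / 2 := by
  have hn' : (n : ℝ) ≠ 0 := by exact_mod_cast hn
  rw [Stirling.log_stirlingSeq_formula, log_div hn' (exp_ne_zero 1), log_exp, stirlingRemainder,
    negMulLog]
  ring

lemma log_stirlingSeq_sub_le {n : ℕ} (hn : n ≠ 0) :
    log (Stirling.stirlingSeq n) - 1 / (12 * n) ≤ log √π := by
  have hmono : Monotone fun m : ℕ =>
      log (Stirling.stirlingSeq (m + n)) - 1 / (12 * (m + n : ℕ)) := by
    refine monotone_nat_of_le_succ fun m => ?_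
    have hstep := Stirling.log_stirlingSeq_sdiff_le (m + n)
    have htel : 1 / (12 * ((m + n : ℕ) : ℝ) * ((m + n : ℕ) + 1)) =
        1 / (12 * (m + n : ℕ)) - 1 / (12 * ((m + 1 + n : ℕ) : ℝ)) := by
      have : ((m + n : ℕ) : ℝ) ≠ 0 := by positivity
      rw [show m + 1 + n = m + n + 1 by ring, Nat.cast_add_one]
      field_simp
      ring
    rw [show m + 1 + n = m + n + 1 by ring] at *
    linarith
  have hlim : Tendsto (fun m : ℕ => log (Stirling.stirlingSeq m) - 1 / (12 * (m : ℝ))) atTop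
      (𝓝 (log √π - 0)) := by
    refine (Stirling.tendsto_stirlingSeq_sqrt_pi.log (by positivity)).sub ?_
    exact tendsto_const_nhds.div_atTop (tendsto_natCast_atTop_atTop.const_mul_atTop (by norm_num))
  have := hmono.ge_of_tendsto ((tendsto_add_atTop_iff_nat n).mpr hlim) 0
  simpa using this

lemma abs_stirlingRemainder_sub_le {n : ℕ} (hn : n ≠ 0) :
    |stirlingRemainder n - log (2 * π * n) / 2| ≤ 1 / (12 * n) := by
  have hlower : log √π ≤ log (Stirling.stirlingSeq n) :=
    log_le_log (by positivity) (Stirling.sqrt_pi_le_stirlingSeq hn)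
  have hupper := log_stirlingSeq_sub_le hn
  have hsplit : log (2 * π * n) / 2 = log √π + log (2 * n) / 2 := by
    rw [log_sqrt pi_pos.le, show 2 * π * n = π * (2 * n) by ring,
      log_mul pi_ne_zero (by positivity)]
    ring
  have : 0 < 1 / (12 * (n : ℝ)) := by positivity
  rw [stirlingRemainder_eq hn, hsplit, abs_le]
  constructor <;> linarith

lemma abs_log_sub_log_le {a b c : ℝ} (hc : 0 < c) (ha : c ≤ a) (hb : c ≤ b) :
    |log a - log b| ≤ |a - b| / c := by
  have hone_sided : ∀ {s t : ℝ}, c ≤ s → c ≤ t → log s - log t ≤ |s - t| / c := by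
    intro s t hs ht
    have ht0 : 0 < t := hc.trans_le ht
    rw [← log_div (hc.trans_le hs).ne' ht0.ne']
    calc log (s / t) ≤ s / t - 1 := log_le_sub_one_of_pos (div_pos (hc.trans_le hs) ht0)
      _ = (s - t) / t := by field_simp
      _ ≤ |s - t| / c := div_le_div₀ (abs_nonneg _) (le_abs_self _) hc ht
  exact abs_sub_le_iff.mpr ⟨hone_sided ha hb, abs_sub_comm a b ▸ hone_sided hb ha⟩

lemma abs_stirlingRemainder_sub_log_le {c m m₀ x : ℝ} (hc : 0 < c) (hm : c ≤ m) (hm₀ : c ≤ m₀)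
    (hx : 0 < x) {n : ℕ} (hn : n = x * m) :
    |stirlingRemainder n - log (2 * π * (x * m₀)) / 2| ≤ c⁻¹ * (x⁻¹ + |m - m₀|) := by
  have hm' : 0 < m := hc.trans_le hm
  have hn0 : n ≠ 0 := by
    rintro rfl
    exact (mul_pos hx hm').ne (by simpa using hn)
  have hfirst : |stirlingRemainder n - log (2 * π * n) / 2| ≤ c⁻¹ * x⁻¹ := by
    refine (abs_stirlingRemainder_sub_le hn0).trans ?_
    rw [hn, ← mul_inv, one_div]
    refine inv_anti₀ (by positivity) ?_
    linarith [mul_le_mul_of_nonneg_left hm hx.le, mul_pos hx hm']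
  have hsecond : |log (2 * π * n) / 2 - log (2 * π * (x * m₀)) / 2| ≤ c⁻¹ * |m - m₀| := by
    have hm₀' : 0 < m₀ := hc.trans_le hm₀
    rw [hn, ← mul_assoc, ← mul_assoc, log_mul (by positivity) hm'.ne',
      log_mul (by positivity) hm₀'.ne', ← sub_div, add_sub_add_left_eq_sub, abs_div, abs_two]
    have := abs_log_sub_log_le hc hm hm₀
    rw [div_eq_inv_mul] at this
    linarith [abs_nonneg (log m - log m₀)]
  rw [mul_add]
  exact (abs_sub_le _ _ _).trans (add_le_add hfirst hsecond)

end Stirling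

section DimerCounting

open Nat in
lemma card_perm_cycleType_replicate_two {α : Type*} [Fintype α] [DecidableEq α] {n : ℕ}
    (hn : 2 * n ≤ Fintype.card α) :
    #{g : Equiv.Perm α | g.cycleType = Multiset.replicate n 2} *
      ((Fintype.card α - 2 * n)! * 2 ^ n * n !) = (Fintype.card α)! := by
  have hsum : (Multiset.replicate n 2).sum = 2 * n := by simp [mul_comm]
  have hprod :
      ∏ i ∈ (Multiset.replicate n 2).toFinset, ((Multiset.replicate n 2).count i)! = n ! := by
    rcases n.eq_zero_or_pos with rfl | h
    · simp
    · simp [Multiset.toFinset_replicate, h.ne']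
  have key := Equiv.Perm.card_of_cycleType_mul_eq α (Multiset.replicate n 2)
  rwa [hsum, hprod, Multiset.prod_replicate,
    if_pos ⟨hn, fun a ha => (Multiset.eq_of_mem_replicate ha).ge⟩] at key

/-- The permutation underlying a dimer configuration, which swaps the endpoints of each dimer. -/
def dimerPerm {N : ℕ} (D : Dimer N) : Equiv.Perm (Fin N) := Function.Involutive.toPerm D.1 D.2

lemma dimerPerm_injective (N : ℕ) : Function.Injective (dimerPerm (N := N)) := fun _ _ h =>
  Subtype.ext (congrArg DFunLike.coe h)

lemma exists_dimerPerm_eq {N : ℕ} {g : Equiv.Perm (Fin N)} (hg : g ^ 2 = 1) :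
    ∃ D : Dimer N, dimerPerm D = g :=
  ⟨⟨g, fun i => by simpa [pow_two] using Equiv.congr_fun hg i⟩, Equiv.ext fun _ => rfl⟩

lemma card_monomers_add_card_support {N : ℕ} (D : Dimer N) :
    #(monomers D) + #(dimerPerm D).support = N := by
  have hsupport : (dimerPerm D).support = univ.filter fun i => ¬ D.1 i = i := by
    ext i
    simp [dimerPerm, Function.Involutive.toPerm]
  rw [hsupport, monomers, card_filter_add_card_filter_not, card_univ, Fintype.card_fin]

lemma exists_cycleType_dimerPerm {N : ℕ} (D : Dimer N) :
    ∃ n, (dimerPerm D).cycleType = Multiset.replicate n 2 ∧ #(monomers D) + 2 * n = N := by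
  have hsq : dimerPerm D ^ 2 = 1 := Equiv.ext D.2
  have hcycle : (dimerPerm D).cycleType = Multiset.replicate _ 2 :=
    Multiset.eq_replicate.mpr ⟨rfl, Equiv.Perm.pow_prime_eq_one_iff.mp hsq⟩
  refine ⟨_, hcycle, ?_⟩
  have hsum := (dimerPerm D).sum_cycleType
  rw [hcycle, Multiset.sum_replicate, smul_eq_mul] at hsum
  linarith [card_monomers_add_card_support D]

lemma cycleType_dimerPerm_eq_iff {N n : ℕ} (D : Dimer N) :
    (dimerPerm D).cycleType = Multiset.replicate n 2 ↔ #(monomers D) + 2 * n = N := by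
  obtain ⟨m, hm, hcard⟩ := exists_cycleType_dimerPerm D
  rw [hm, (Multiset.replicate_left_injective 2).eq_iff]
  omega

open Nat in
lemma card_dimer_mul_eq_factorial {N n : ℕ} (hn : 2 * n ≤ N) :
    #{D : Dimer N | #(monomers D) + 2 * n = N} * ((N - 2 * n)! * 2 ^ n * n !) = N ! := by
  have hcard : #{D : Dimer N | #(monomers D) + 2 * n = N} =
      #{g : Equiv.Perm (Fin N) | g.cycleType = Multiset.replicate n 2} := by
    refine card_bij (fun D _ => dimerPerm D) (fun D hD => ?_)
      (fun D _ D' _ h => dimerPerm_injective N h) (fun g hg => ?_)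
    · simpa [cycleType_dimerPerm_eq_iff] using hD
    · rw [mem_filter_univ] at hg
      obtain ⟨D, rfl⟩ := exists_dimerPerm_eq (Equiv.Perm.pow_prime_eq_one_iff.mpr fun c hc =>
        Multiset.eq_of_mem_replicate (hg ▸ hc))
      exact ⟨D, by simpa [cycleType_dimerPerm_eq_iff] using hg, rfl⟩
  rw [hcard]
  simpa using card_perm_cycleType_replicate_two (α := Fin N) (by simpa using hn)

/-- The number of monomers at level `j`: it has the parity of `N`, and the remaining vertices are
covered by `N / 2 - j` dimers. -/
def monomerLevel (N j : ℕ) : ℕ := N % 2 + 2 * j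

lemma monomerLevel_add {N j : ℕ} (hj : j ≤ N / 2) : monomerLevel N j + 2 * (N / 2 - j) = N := by
  rw [monomerLevel]
  omega

open Nat in
/-- The number of dimer configurations with `monomerLevel N j` monomers, for `j ≤ N / 2`. -/
noncomputable def dimerCount (N j : ℕ) : ℝ :=
  N ! / ((monomerLevel N j)! * 2 ^ (N / 2 - j) * (N / 2 - j)!)

lemma dimerCount_pos (N j : ℕ) : 0 < dimerCount N j := by
  rw [dimerCount]
  positivity

lemma card_dimer_eq_dimerCount {N j : ℕ} (hj : j ≤ N / 2) :
    (#{D : Dimer N | #(monomers D) = monomerLevel N j} : ℝ) = dimerCount N j := by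
  have hlevel := monomerLevel_add hj
  have hcount := card_dimer_mul_eq_factorial (N := N) (n := N / 2 - j) (by omega)
  rw [show N - 2 * (N / 2 - j) = monomerLevel N j by omega] at hcount
  have hiff (D : Dimer N) :
      #(monomers D) = monomerLevel N j ↔ #(monomers D) + 2 * (N / 2 - j) = N := by omega
  simp only [hiff]
  rw [dimerCount, eq_div_iff (by positivity)]
  exact_mod_cast hcount

lemma sum_Dcount_mul (N : ℕ) (g : ℕ → ℝ) :
    ∑ σ : Config N, (Dcount N σ : ℝ) * g (Msum σ) = ∑ D : Dimer N, g #(monomers D) := by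
  let φ (D : Dimer N) : Config N := fun i => decide (i ∈ monomers D)
  have hφ (D : Dimer N) (σ : Config N) : monomers D = ASet σ ↔ φ D = σ := by
    refine ⟨fun h => ?_, fun h => ?_⟩
    · funext i
      simp only [φ, h, ASet, mem_filter_univ, Bool.decide_eq_true]
    · ext i
      simp only [ASet, ← h, φ, mem_filter_univ, decide_eq_true_eq]
  have hfiber (σ : Config N) : (Dcount N σ : ℝ) * g (Msum σ) =
      ∑ D : Dimer N with φ D = σ, g #(monomers D) := by
    simp only [Dcount, hφ]
    rw [← nsmul_eq_mul, ← sum_const]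
    refine sum_congr rfl fun D hD => ?_
    rw [(hφ D σ).mpr (mem_filter.mp hD).2, Msum]
  simp_rw [hfiber]
  exact sum_fiberwise _ _ _

lemma sum_dimer_eq_sum_level (N : ℕ) (g : ℕ → ℝ) :
    ∑ D : Dimer N, g #(monomers D) =
      ∑ j ∈ range (N / 2 + 1), dimerCount N j * g (monomerLevel N j) := by
  have hlevel (D : Dimer N) : monomerLevel N (#(monomers D) / 2) = #(monomers D) := by
    obtain ⟨n, -, hn⟩ := exists_cycleType_dimerPerm D
    rw [monomerLevel]
    omega
  have hmaps : ∀ D ∈ (univ : Finset (Dimer N)), #(monomers D) / 2 ∈ range (N / 2 + 1) :=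
    fun D _ => by
      obtain ⟨n, -, hn⟩ := exists_cycleType_dimerPerm D
      rw [mem_range]
      omega
  rw [← sum_fiberwise_of_maps_to hmaps]
  refine sum_congr rfl fun j hj => ?_
  rw [← card_dimer_eq_dimerCount (Nat.lt_succ_iff.mp (mem_range.mp hj)), ← nsmul_eq_mul,
    ← sum_const]
  refine sum_congr (filter_congr fun D _ => ?_) fun D hD => by rw [(mem_filter.mp hD).2]
  have := hlevel D
  unfold monomerLevel at *
  omega

/-- The monomer density at level `j`. -/
noncomputable def levelDensity (N j : ℕ) : ℝ := (monomerLevel N j : ℝ) / N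

/-- The total Gibbs weight of the configurations with `monomerLevel N j` monomers. -/
noncomputable def levelWeight (J h : ℝ) (N j : ℕ) : ℝ :=
  dimerCount N j * rexp (N * (J * levelDensity N j ^ 2 + bIMD N J h * levelDensity N j))

lemma levelWeight_pos (J h : ℝ) (N j : ℕ) : 0 < levelWeight J h N j :=
  mul_pos (dimerCount_pos N j) (exp_pos _)

lemma probConf_eq_sum_levelWeight_div (J h : ℝ) (N : ℕ) (P : ℕ → Prop) [DecidablePred P] :
    probConf N J h (fun σ => P (Msum σ)) =
      (∑ j ∈ range (N / 2 + 1), if P (monomerLevel N j) then levelWeight J h N j else 0) /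
        ∑ j ∈ range (N / 2 + 1), levelWeight J h N j := by
  let gibbs (r : ℕ) : ℝ := rexp (N * (J * ((r : ℝ) / N) ^ 2 + bIMD N J h * ((r : ℝ) / N)))
  have hsum (g : ℕ → ℝ) := (sum_Dcount_mul N g).trans (sum_dimer_eq_sum_level N g)
  rw [probConf]
  congr 1
  · have hevent := hsum fun r => if P r then gibbs r else 0
    simp only [mul_ite, mul_zero] at hevent
    refine Eq.trans (sum_congr rfl fun σ _ => ?_) hevent
    by_cases hP : P (Msum σ) <;> simp [hP, wConf, mConf, gibbs]
  · exact hsum gibbs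

lemma mul_levelDensity {N : ℕ} (hN : N ≠ 0) (j : ℕ) :
    N * levelDensity N j = monomerLevel N j := by
  rw [levelDensity]
  field_simp

lemma half_mul_one_sub_levelDensity {N j : ℕ} (hN : N ≠ 0) (hj : j ≤ N / 2) :
    N / 2 * (1 - levelDensity N j) = ((N / 2 - j : ℕ) : ℝ) := by
  have hlevel : (monomerLevel N j : ℝ) + 2 * ((N / 2 - j : ℕ) : ℝ) = N := by
    exact_mod_cast monomerLevel_add hj
  linarith [mul_levelDensity hN j]

lemma levelDensity_mem_Icc {N j : ℕ} (hj : j ≤ N / 2) : levelDensity N j ∈ Set.Icc 0 1 := by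
  refine ⟨by unfold levelDensity; positivity, div_le_one_of_le₀ ?_ N.cast_nonneg⟩
  exact_mod_cast (Nat.le_add_right _ _).trans_eq (monomerLevel_add hj)

end DimerCounting

section RateFunction

lemma exists_gap_of_forall_lt {X : Type*} [PseudoMetricSpace X] {s : Set X} {f : X → ℝ} {x₀ : X}
    (hs : IsCompact s) (hf : ContinuousOn f s) (hlt : ∀ x ∈ s, x ≠ x₀ → f x < f x₀)
    {δ : ℝ} (hδ : 0 < δ) : ∃ η > 0, ∀ x ∈ s, δ ≤ dist x x₀ → f x + η ≤ f x₀ := by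
  have hcompact : IsCompact (s ∩ {x | δ ≤ dist x x₀}) :=
    hs.inter_right (isClosed_le continuous_const (by fun_prop))
  rcases (s ∩ {x | δ ≤ dist x x₀}).eq_empty_or_nonempty with hempty | hne
  · exact ⟨1, one_pos, fun x hx hd => absurd ⟨hx, hd⟩ (Set.eq_empty_iff_forall_notMem.mp hempty x)⟩
  · obtain ⟨x, ⟨hx, hd⟩, hmax⟩ := hcompact.exists_isMaxOn hne (hf.mono Set.inter_subset_left)
    have hx₀ : x ≠ x₀ := by
      rintro rfl
      exact hδ.not_ge (dist_self x ▸ hd)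
    refine ⟨f x₀ - f x, sub_pos.mpr (hlt x hx hx₀), fun y hy hyd => ?_⟩
    linarith [show f y ≤ f x from hmax ⟨hy, hyd⟩]

/-- The exponential growth rate in `N` of the weight of the configurations of monomer density `m`,
relative to the density-independent `logLevelScale N`. Unlike `𝑝̃`, it is the growth rate at every
density and for either sign of `J`. -/
noncomputable def levelRate (J h m : ℝ) : ℝ :=
  negMulLog m + negMulLog (1 - m) / 2 + m / 2 + J * m ^ 2 + (h - J) * m

/-- The derivative of `levelRate` on `(0, 1)`. -/
noncomputable def levelRateDeriv (J h m : ℝ) : ℝ := -log m + log (1 - m) / 2 + tauFun J h m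

lemma continuous_levelRate (J h : ℝ) : Continuous (levelRate J h) := by
  unfold levelRate
  have := Real.continuous_negMulLog
  fun_prop

lemma hasDerivAt_levelRate (J h : ℝ) {m : ℝ} (hm : 0 < m) (hm' : m < 1) :
    HasDerivAt (levelRate J h) (levelRateDeriv J h m) m := by
  have hsub : HasDerivAt (fun y : ℝ => 1 - y) (-1) m := (hasDerivAt_id m).const_sub 1
  have hentropy := (Real.hasDerivAt_negMulLog hm.ne').add
    (((Real.hasDerivAt_negMulLog (sub_pos.mpr hm').ne').comp m hsub).div_const 2)
  have hquad := ((hasDerivAt_pow 2 m).const_mul J).add ((hasDerivAt_id m).const_mul (h - J))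
  refine ((hentropy.add ((hasDerivAt_id m).div_const 2)).add hquad).congr_deriv ?_
    |>.congr_of_eventuallyEq (.of_forall fun y => ?_)
  · simp only [levelRateDeriv, tauFun]
    ring
  · simp only [levelRate, Pi.add_apply, Function.comp_apply, id_eq]
    ring

lemma exp_four_mul_eq_sq (x : ℝ) : rexp (4 * x) = rexp (2 * x) ^ 2 := by
  rw [← Real.exp_nat_mul]
  ring_nf

lemma gFun_pos (x : ℝ) : 0 < gFun x := by
  have hE := exp_pos (2 * x)
  have hlt : rexp (2 * x) < √(rexp (4 * x) + 4 * rexp (2 * x)) :=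
    Real.lt_sqrt_of_sq_lt (by linarith [exp_four_mul_eq_sq x])
  rw [gFun]
  linarith

lemma gFun_lt_one (x : ℝ) : gFun x < 1 := by
  have hlt : √(rexp (4 * x) + 4 * rexp (2 * x)) < rexp (2 * x) + 2 :=
    (Real.sqrt_lt' (by positivity)).mpr (by linarith [exp_four_mul_eq_sq x])
  rw [gFun]
  linarith

lemma gFun_sq (x : ℝ) : gFun x ^ 2 = (1 - gFun x) * rexp (2 * x) := by
  have hsq := Real.sq_sqrt (show 0 ≤ rexp (4 * x) + 4 * rexp (2 * x) by positivity)
  rw [gFun]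
  linear_combination hsq / 4 + exp_four_mul_eq_sq x / 4

lemma eq_gFun_of_sq_eq {m x : ℝ} (hm : 0 ≤ m) (h : m ^ 2 = (1 - m) * rexp (2 * x)) :
    m = gFun x := by
  have hfactor : (m - gFun x) * (m + gFun x + rexp (2 * x)) = 0 := by linarith [gFun_sq x]
  have hpos : 0 < m + gFun x + rexp (2 * x) := by linarith [gFun_pos x, exp_pos (2 * x)]
  exact sub_eq_zero.mp ((mul_eq_zero.mp hfactor).resolve_right hpos.ne')

lemma eq_log_gFun_sub (x : ℝ) : x = log (gFun x) - log (1 - gFun x) / 2 := by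
  have hlog := congrArg log (gFun_sq x)
  rw [Real.log_pow, Real.log_mul (sub_pos.mpr (gFun_lt_one x)).ne' (exp_pos _).ne',
    Real.log_exp] at hlog
  push_cast at hlog
  linarith

lemma sub_le_mul_log_sub {a b : ℝ} (ha : 0 ≤ a) (hb : 0 < b) : a - b ≤ a * (log a - log b) := by
  rcases ha.eq_or_lt with rfl | ha'
  · simpa using hb.le
  · rw [← Real.log_div ha'.ne' hb.ne']
    calc a - b = a * (1 - (a / b)⁻¹) := by field_simp
      _ ≤ a * log (a / b) := by gcongr; exact Real.one_sub_inv_le_log_of_pos (div_pos ha' hb)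

lemma levelRate_le_ptilde_add_half (J h : ℝ) {m : ℝ} (hm : m ∈ Set.Icc (0 : ℝ) 1) :
    levelRate J h m ≤ ptilde J h m + 1 / 2 := by
  let g := gFun (tauFun J h m)
  have hmono := sub_le_mul_log_sub hm.1 (gFun_pos (tauFun J h m))
  have hdimer := sub_le_mul_log_sub (sub_nonneg.mpr hm.2) (sub_pos.mpr (gFun_lt_one (tauFun J h m)))
  have hτ : m * ((2 * m - 1) * J + h) = m * (log g - log (1 - g) / 2) :=
    congrArg (m * ·) (eq_log_gFun_sub (tauFun J h m))
  simp only [levelRate, ptilde, negMulLog]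
  linarith

lemma levelRate_eq_ptilde_add_half (J h : ℝ) {m : ℝ} (hm : m = gFun (tauFun J h m)) :
    levelRate J h m = ptilde J h m + 1 / 2 := by
  have hτ : (2 * m - 1) * J + h = log m - log (1 - m) / 2 :=
    (eq_log_gFun_sub (tauFun J h m)).trans (by rw [← hm])
  rw [levelRate, ptilde, ← hm, negMulLog, negMulLog]
  linear_combination m * hτ

lemma levelRate_lt_of_ptilde_lt (J h : ℝ) {m m₀ : ℝ} (hm : m ∈ Set.Icc (0 : ℝ) 1)
    (hm₀ : m₀ = gFun (tauFun J h m₀)) (hlt : ptilde J h m < ptilde J h m₀) :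
    levelRate J h m < levelRate J h m₀ :=
  calc levelRate J h m ≤ ptilde J h m + 1 / 2 := levelRate_le_ptilde_add_half J h hm
    _ < ptilde J h m₀ + 1 / 2 := by gcongr
    _ = levelRate J h m₀ := (levelRate_eq_ptilde_add_half J h hm₀).symm

lemma hasDerivAt_Lone_one (J h : ℝ) :
    HasDerivAt (Lone J h) (-2 / rexp (2 * tauFun J h 1)) 1 := by
  have hfactor : HasDerivAt (fun m : ℝ => 2 * (1 - m)) (-2) 1 := by
    simpa using ((hasDerivAt_id (1 : ℝ)).const_sub 1).const_mul 2
  have hrest : DifferentiableAt ℝ (fun m => (m ^ 2 - (1 - m) * rexp (2 * tauFun J h m)) /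
      ((1 - m) + rexp (2 * tauFun J h m))) 1 := by
    unfold tauFun
    refine DifferentiableAt.div ?_ ?_ (by simp) <;> fun_prop
  refine ((hfactor.mul hrest.hasDerivAt).congr_deriv ?_).congr_of_eventuallyEq
    (.of_forall fun m => ?_)
  · simp [div_eq_mul_inv]
  · simp only [Lone, Pi.mul_apply]
    ring

lemma sq_eq_of_Lone_eq_zero (J h : ℝ) {m : ℝ} (hm : m < 1) (hzero : Lone J h m = 0) :
    m ^ 2 = (1 - m) * rexp (2 * tauFun J h m) := by
  have hE := exp_pos (2 * tauFun J h m)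
  rw [Lone, div_eq_zero_iff, or_iff_left (by linarith), mul_eq_zero,
    or_iff_right (by linarith)] at hzero
  linarith

-- `Lone` also vanishes at `1`, but with negative derivative there.
lemma lt_one_of_iteratedDeriv_Lone {J h m : ℝ} {k : ℕ} (hm : m ≤ 1)
    (hzero : ∀ l ≤ 2 * k, iteratedDeriv l (Lone J h) m = 0)
    (hpos : 0 < iteratedDeriv (2 * k + 1) (Lone J h) m) : m < 1 := by
  refine hm.lt_of_ne ?_
  rintro rfl
  have hderiv : 0 ≤ deriv (Lone J h) 1 := by
    rw [← iteratedDeriv_one]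
    rcases k.eq_zero_or_pos with rfl | hk
    · exact hpos.le
    · exact (hzero 1 (by omega)).ge
  rw [(hasDerivAt_Lone_one J h).deriv] at hderiv
  exact hderiv.not_gt (div_neg_of_neg_of_pos (by norm_num) (exp_pos _))

lemma pos_of_Lone_eq_zero {J h m : ℝ} (hm : 0 ≤ m) (hm' : m < 1) (hzero : Lone J h m = 0) :
    0 < m := by
  have hsq := sq_eq_of_Lone_eq_zero J h hm' hzero
  exact hm.lt_of_ne' (sq_pos_iff.mp (hsq ▸ mul_pos (sub_pos.mpr hm') (exp_pos _)))

lemma analyticAt_Lone (J h : ℝ) {m : ℝ} (hm : m < 1) : AnalyticAt ℝ (Lone J h) m := by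
  have hden : (1 - m) + rexp (2 * tauFun J h m) ≠ 0 := by
    linarith [exp_pos (2 * tauFun J h m)]
  unfold Lone tauFun at *
  refine AnalyticAt.div ?_ ?_ hden <;> fun_prop

/-- The positive factor in `Lone = LoneCofactor * (1 - exp (2 * levelRateDeriv))`. -/
noncomputable def LoneCofactor (J h m : ℝ) : ℝ :=
  2 * (1 - m) * m ^ 2 / ((1 - m) + rexp (2 * tauFun J h m))

lemma LoneCofactor_pos (J h : ℝ) {m : ℝ} (hm : 0 < m) (hm' : m < 1) : 0 < LoneCofactor J h m := by
  have := sub_pos.mpr hm'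
  unfold LoneCofactor
  positivity

lemma differentiableAt_LoneCofactor (J h : ℝ) {m : ℝ} (hm : m < 1) :
    DifferentiableAt ℝ (LoneCofactor J h) m := by
  have hden : (1 - m) + rexp (2 * tauFun J h m) ≠ 0 := by
    linarith [exp_pos (2 * tauFun J h m)]
  unfold LoneCofactor tauFun at *
  refine DifferentiableAt.div ?_ ?_ hden <;> fun_prop

lemma Ltwo_eq_four_mul_LoneCofactor (J h : ℝ) {m : ℝ}
    (hsq : m ^ 2 = (1 - m) * rexp (2 * tauFun J h m)) :
    Ltwo J h m = 4 * LoneCofactor J h m := by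
  rw [Ltwo, LoneCofactor, ← hsq]
  ring

lemma levelRateDeriv_eq_log (J h : ℝ) {m : ℝ} (hm : 0 < m) (hm' : m < 1) :
    levelRateDeriv J h m = log (1 - Lone J h m * (LoneCofactor J h m)⁻¹) / 2 := by
  have hE := exp_pos (2 * tauFun J h m)
  have hsub := sub_pos.mpr hm'
  have hratio : 1 - Lone J h m * (LoneCofactor J h m)⁻¹ =
      (1 - m) * rexp (2 * tauFun J h m) / m ^ 2 := by
    have hden : (1 - m) + rexp (2 * tauFun J h m) ≠ 0 := by positivity
    unfold Lone LoneCofactor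
    field_simp
    ring
  rw [hratio, Real.log_div (by positivity) (by positivity), Real.log_mul hsub.ne' hE.ne',
    Real.log_exp, Real.log_pow, levelRateDeriv]
  push_cast
  ring

lemma hasLeadingTerm_half_log_one_sub :
    HasLeadingTerm (fun t => log (1 - t) / 2) 0 1 (-1 / 2) := by
  have hderiv : HasDerivAt (fun t : ℝ => log (1 - t) / 2) (-1 / 2) 0 := by
    simpa using (((hasDerivAt_id (0 : ℝ)).const_sub 1).log (by simp)).div_const 2
  have hanalytic : AnalyticAt ℝ (fun t : ℝ => log (1 - t) / 2) 0 :=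
    ((analyticAt_const.sub analyticAt_id).log (by simp)).div_const
  have hleading := hasLeadingTerm_of_analyticAt (q := 1) hanalytic fun l hl => by
    simp [Nat.lt_one_iff.mp hl]
  rwa [iteratedDeriv_one, hderiv.deriv, Nat.factorial_one, Nat.cast_one, div_one] at hleading

open Filter Topology in
lemma hasLeadingTerm_levelRate {J h m₀ : ℝ} {q : ℕ} (hq : q ≠ 0) (hm₀ : 0 < m₀) (hm₀' : m₀ < 1)
    (hzero : ∀ l < q, iteratedDeriv l (Lone J h) m₀ = 0) :
    HasLeadingTerm (fun m => levelRate J h m - levelRate J h m₀) m₀ (q + 1)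
      (-(2 * iteratedDeriv q (Lone J h) m₀ / ((q + 1).factorial * Ltwo J h m₀))) := by
  have hnear : ∀ᶠ m in 𝓝 m₀, 0 < m ∧ m < 1 :=
    (lt_mem_nhds hm₀).and (gt_mem_nhds hm₀')
  have hinv : DifferentiableAt ℝ (fun m => (LoneCofactor J h m)⁻¹) m₀ :=
    (differentiableAt_LoneCofactor J h hm₀').inv (LoneCofactor_pos J h hm₀ hm₀').ne'
  have hLone := hasLeadingTerm_of_analyticAt (analyticAt_Lone J h hm₀') hzero
  have hderiv := (hasLeadingTerm_half_log_one_sub.comp (hLone.mul hinv) hq).congr'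
    (hnear.mono fun m hm => (levelRateDeriv_eq_log J h hm.1 hm.2).symm)
  have hrate := hderiv.primitive (hnear.mono fun m hm => hasDerivAt_levelRate J h hm.1 hm.2)
  have hsq := sq_eq_of_Lone_eq_zero J h hm₀' (hzero 0 (Nat.pos_of_ne_zero hq))
  convert hrate using 1
  rw [Ltwo_eq_four_mul_LoneCofactor J h hsq, Nat.factorial_succ]
  push_cast
  field_simp
  ring

end RateFunction

section LocalLimit

/-- The part of the logarithm of `levelWeight` that does not depend on the level. -/
noncomputable def logLevelScale (N : ℕ) : ℝ := log N.factorial - N / 2 * log N + N / 2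

lemma log_levelWeight_eq (J h : ℝ) {N j : ℕ} (hN : N ≠ 0) (hj : j ≤ N / 2) :
    log (levelWeight J h N j) = logLevelScale N + N * levelRate J h (levelDensity N j) -
      stirlingRemainder (monomerLevel N j) - stirlingRemainder (N / 2 - j) := by
  have hmonomers : (monomerLevel N j : ℝ) = N * levelDensity N j := (mul_levelDensity hN j).symm
  have hdimers : ((N / 2 - j : ℕ) : ℝ) = N / 2 * (1 - levelDensity N j) :=
    (half_mul_one_sub_levelDensity hN hj).symm
  have hlogN : log ((N : ℝ) / 2) = log N - log 2 :=
    Real.log_div (Nat.cast_ne_zero.mpr hN) two_ne_zero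
  rw [levelWeight, Real.log_mul (dimerCount_pos N j).ne' (exp_pos _).ne', Real.log_exp, dimerCount,
    Real.log_div (by positivity) (by positivity), Real.log_mul (by positivity) (by positivity),
    Real.log_mul (by positivity) (by positivity), Real.log_pow, bIMD]
  simp only [stirlingRemainder, logLevelScale, levelRate, hmonomers, hdimers,
    Real.negMulLog_mul]
  simp only [negMulLog, hlogN]
  ring

/-- The value of `levelWeight` at density `m₀` according to Stirling's formula. -/
noncomputable def levelNormalizer (J h m₀ : ℝ) (N : ℕ) : ℝ :=
  rexp (logLevelScale N + N * levelRate J h m₀ - log (2 * π * (N * m₀)) / 2 -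
    log (2 * π * (N / 2 * (1 - m₀))) / 2)

lemma levelNormalizer_pos (J h m₀ : ℝ) (N : ℕ) : 0 < levelNormalizer J h m₀ N := exp_pos _

lemma log_levelWeight_div_eq (J h m₀ : ℝ) {N j : ℕ} (hN : N ≠ 0) (hj : j ≤ N / 2) :
    log (levelWeight J h N j / levelNormalizer J h m₀ N) =
      N * (levelRate J h (levelDensity N j) - levelRate J h m₀) -
        (stirlingRemainder (monomerLevel N j) - log (2 * π * (N * m₀)) / 2) -
        (stirlingRemainder (N / 2 - j) - log (2 * π * (N / 2 * (1 - m₀))) / 2) := by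
  rw [Real.log_div (levelWeight_pos J h N j).ne' (levelNormalizer_pos J h m₀ N).ne',
    log_levelWeight_eq J h hN hj, levelNormalizer, Real.log_exp]
  ring

lemma abs_log_levelWeight_div_sub_le (J h : ℝ) {m₀ c : ℝ} {N j : ℕ} (hN : N ≠ 0) (hj : j ≤ N / 2)
    (hc : 0 < c) (hm₀ : m₀ ∈ Set.Icc c (1 - c)) (hm : levelDensity N j ∈ Set.Icc c (1 - c)) :
    |log (levelWeight J h N j / levelNormalizer J h m₀ N) -
        N * (levelRate J h (levelDensity N j) - levelRate J h m₀)| ≤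
      c⁻¹ * (3 * (N : ℝ)⁻¹ + 2 * |levelDensity N j - m₀|) := by
  have hN' : (0 : ℝ) < N := by positivity
  have hmonomers := abs_stirlingRemainder_sub_log_le hc hm.1 hm₀.1 hN' (mul_levelDensity hN j).symm
  have hdimers := abs_stirlingRemainder_sub_log_le hc (le_sub_comm.mp hm.2) (le_sub_comm.mp hm₀.2)
    (half_pos hN') (half_mul_one_sub_levelDensity hN hj).symm
  rw [sub_sub_sub_cancel_left, abs_sub_comm m₀,
    show ((N : ℝ) / 2)⁻¹ = 2 * (N : ℝ)⁻¹ by ring] at hdimers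
  rw [log_levelWeight_div_eq J h m₀ hN hj, abs_le]
  rw [abs_le] at hmonomers hdimers
  constructor <;> linarith

variable {J h m₀ d : ℝ} {p : ℕ}

lemma exists_abs_log_levelWeight_div_add_le (hm₀ : 0 < m₀) (hm₀' : m₀ < 1) (hp : Even p)
    (hd : 0 < d)
    (hrate : HasLeadingTerm (fun m => levelRate J h m - levelRate J h m₀) m₀ p (-d)) :
    ∃ δ > 0, ∃ C ≥ 0, ∀ {N j : ℕ} {y X : ℝ}, N ≠ 0 → j ≤ N / 2 → y = levelDensity N j - m₀ →
      |y| < δ → X = log (levelWeight J h N j / levelNormalizer J h m₀ N) + N * (d * y ^ p) →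
      |X| ≤ C * (N * |y| ^ (p + 1) + |y| + (N : ℝ)⁻¹) ∧ |X| ≤ N * (d / 2 * y ^ p) + C := by
  obtain ⟨δ, hδ, C, hC, hexpand⟩ := hrate.exists_abs_sub_le
  obtain ⟨c, hc, hcm₀, hcm₀'⟩ : ∃ c > 0, 2 * c ≤ m₀ ∧ 2 * c ≤ 1 - m₀ :=
    ⟨min m₀ (1 - m₀) / 2, half_pos (lt_min hm₀ (sub_pos.mpr hm₀')),
      by linarith [min_le_left m₀ (1 - m₀)], by linarith [min_le_right m₀ (1 - m₀)]⟩
  refine ⟨min (min δ c) (d / (2 * (C + 1))), by positivity, C + 5 * c⁻¹, by positivity, ?_⟩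
  rintro N j y X hN hj rfl hy rfl
  set y := levelDensity N j - m₀
  obtain ⟨⟨hyδ, hyc⟩, hyd⟩ := And.imp_left lt_min_iff.mp (lt_min_iff.mp hy)
  have hN' : (0 : ℝ) < N := by positivity
  have hstirling := abs_log_levelWeight_div_sub_le J h hN hj hc (m₀ := m₀)
    ⟨by linarith, by linarith⟩
    ⟨by linarith [(abs_lt.mp hyc).1], by linarith [(abs_lt.mp hyc).2]⟩
  have hX : |log (levelWeight J h N j / levelNormalizer J h m₀ N) + N * (d * y ^ p)| ≤
      N * (C * |y| ^ (p + 1)) + c⁻¹ * (3 * (N : ℝ)⁻¹ + 2 * |y|) := by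
    have hscaled := mul_le_mul_of_nonneg_left (hexpand (levelDensity N j) hyδ) hN'.le
    rw [← abs_of_pos hN', ← abs_mul, abs_of_pos hN'] at hscaled
    rw [abs_le] at hscaled hstirling ⊢
    constructor <;> linarith
  refine ⟨hX.trans ?_, hX.trans ?_⟩
  · have : 0 ≤ C * (|y| + (N : ℝ)⁻¹) +
        c⁻¹ * (5 * (N * |y| ^ (p + 1)) + 3 * |y| + 2 * (N : ℝ)⁻¹) := by positivity
    linarith
  · have hhalf : C * |y| ^ (p + 1) ≤ d / 2 * y ^ p := by
      have hCy : C * |y| ≤ d / 2 := by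
        rw [lt_div_iff₀ (by positivity)] at hyd
        nlinarith [abs_nonneg y]
      rw [pow_succ', hp.pow_abs, ← mul_assoc]
      exact mul_le_mul_of_nonneg_right hCy (hp.pow_nonneg y)
    have hinv : (N : ℝ)⁻¹ ≤ 1 := inv_le_one_of_one_le₀ (by exact_mod_cast hN.bot_lt)
    have hrest : c⁻¹ * (3 * (N : ℝ)⁻¹ + 2 * |y|) ≤ c⁻¹ * 5 := by gcongr; linarith
    linarith [mul_le_mul_of_nonneg_left hhalf hN'.le]

lemma exists_near_abs_levelWeight_div_sub_le (hm₀ : 0 < m₀) (hm₀' : m₀ < 1) (hp : Even p)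
    (hp0 : p ≠ 0) (hd : 0 < d)
    (hrate : HasLeadingTerm (fun m => levelRate J h m - levelRate J h m₀) m₀ p (-d)) :
    ∃ δ > 0, ∃ K ≥ 0, ∀ {N j : ℕ} {ε x : ℝ}, 0 < ε → ε ≤ 1 → N * ε ^ p = 1 → j ≤ N / 2 →
      levelDensity N j - m₀ = ε * x → |ε * x| < δ →
      |levelWeight J h N j / levelNormalizer J h m₀ N - rexp (-(d * x ^ p))| ≤
        K * ε * (1 + x ^ 2)⁻¹ := by
  obtain ⟨δ, hδ, C, hC, hlog⟩ := exists_abs_log_levelWeight_div_add_le hm₀ hm₀' hp hd hrate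
  obtain ⟨K, hK, hexp⟩ :=
    exists_abs_exp_neg_add_sub_le hp hp0 hd (p + 1) (C := 2 * C) (by positivity)
  refine ⟨δ, hδ, K, hK, fun {N j ε x} hε hε1 hNε hj hx hxδ => ?_⟩
  have hN : N ≠ 0 := by
    rintro rfl
    simp at hNε
  have hinv : (N : ℝ)⁻¹ = ε ^ p := inv_eq_of_mul_eq_one_right hNε
  have hpow (r : ℝ) : (N : ℝ) * (r * (ε * x) ^ p) = r * x ^ p := by
    linear_combination (r * x ^ p) * hNε + N * r * mul_pow ε x p
  obtain ⟨hX, hX'⟩ := hlog hN hj hx.symm hxδ rfl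
  rw [hpow, hpow] at hX'
  rw [hpow] at hX
  have hratio : 0 < levelWeight J h N j / levelNormalizer J h m₀ N :=
    div_pos (levelWeight_pos J h N j) (levelNormalizer_pos J h m₀ N)
  have key := hexp hε.le (hX.trans ?_) (hX'.trans (by linarith))
  · rwa [neg_add_eq_sub, add_sub_cancel_right, Real.exp_log hratio] at key
  · have hεp : ε ^ p ≤ ε := pow_le_of_le_one hε.le hε1 hp0
    have hcubic : (N : ℝ) * |ε * x| ^ (p + 1) = ε * |x| ^ (p + 1) := by
      rw [abs_mul, abs_of_pos hε]
      linear_combination (ε * |x| ^ (p + 1)) * hNε + N * mul_pow ε |x| (p + 1)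
    have hlarge : |x| + 2 ≤ (|x| + 2) ^ (p + 1) :=
      le_self_pow₀ (by linarith [abs_nonneg x]) p.succ_ne_zero
    have hsmall : |x| ^ (p + 1) ≤ (|x| + 2) ^ (p + 1) := by gcongr; linarith
    rw [hcubic, hinv, abs_mul, abs_of_pos hε]
    calc C * (ε * |x| ^ (p + 1) + ε * |x| + ε ^ p)
        ≤ C * (ε * (|x| + 2) ^ (p + 1) + ε * |x| + ε) := by gcongr
      _ ≤ C * (ε * (|x| + 2) ^ (p + 1) + ε * (|x| + 2) ^ (p + 1)) := by
        rw [add_assoc]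
        gcongr
        nlinarith
      _ = 2 * C * ε * (|x| + 2) ^ (p + 1) := by ring

lemma levelWeight_div_le_of_levelRate_add_le (hm₀ : 0 < m₀) (hm₀' : m₀ < 1) {η : ℝ} (hη : 0 < η)
    {N j : ℕ} (hN : N ≠ 0) (hj : j ≤ N / 2)
    (hgap : levelRate J h (levelDensity N j) + η ≤ levelRate J h m₀) :
    levelWeight J h N j / levelNormalizer J h m₀ N ≤ 12 * π / η ^ 3 * ((N : ℝ)⁻¹) ^ 2 := by
  have hN' : (0 : ℝ) < N := by positivity
  have := sub_pos.mpr hm₀'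
  have hlog_monomers : log (2 * π * (N * m₀)) / 2 ≤ log (2 * π * N) / 2 := by
    gcongr
    exact mul_le_of_le_one_right hN'.le hm₀'.le
  have hlog_dimers : log (2 * π * (N / 2 * (1 - m₀))) / 2 ≤ log (2 * π * N) / 2 := by
    gcongr
    exact (mul_le_of_le_one_right (half_pos hN').le (sub_le_self 1 hm₀.le)).trans
      (half_le_self hN'.le)
  have hlog : log (levelWeight J h N j / levelNormalizer J h m₀ N) ≤
      -(N * η) + log (2 * π * N) := by
    rw [log_levelWeight_div_eq J h m₀ hN hj]
    have hscaled := mul_le_mul_of_nonneg_left hgap hN'.le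
    linarith [stirlingRemainder_nonneg (monomerLevel N j), stirlingRemainder_nonneg (N / 2 - j)]
  have hratio : 0 < levelWeight J h N j / levelNormalizer J h m₀ N :=
    div_pos (levelWeight_pos J h N j) (levelNormalizer_pos J h m₀ N)
  have hexp : rexp (-(N * η)) ≤ 6 / (N * η) ^ 3 := by
    have hcube := Real.pow_div_factorial_le_exp (N * η) (by positivity) 3
    rw [Real.exp_neg, ← inv_div]
    exact inv_anti₀ (by positivity) (by simpa [Nat.factorial] using hcube)
  calc levelWeight J h N j / levelNormalizer J h m₀ N
      ≤ rexp (-(N * η) + log (2 * π * N)) := (Real.log_le_iff_le_exp hratio).mp hlog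
    _ = rexp (-(N * η)) * (2 * π * N) := by rw [Real.exp_add, Real.exp_log (by positivity)]
    _ ≤ 6 / (N * η) ^ 3 * (2 * π * N) := by gcongr
    _ = 12 * π / η ^ 3 * ((N : ℝ)⁻¹) ^ 2 := by
      field_simp
      norm_num

lemma exists_far_abs_levelWeight_div_sub_le (hm₀ : 0 < m₀) (hm₀' : m₀ < 1) (hp : Even p)
    (hp0 : p ≠ 0) (hd : 0 < d)
    (hmax : ∀ m ∈ Set.Icc (0 : ℝ) 1, m ≠ m₀ → levelRate J h m < levelRate J h m₀)
    {δ : ℝ} (hδ : 0 < δ) :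
    ∃ K, ∀ {N j : ℕ} {ε x : ℝ}, 0 < ε → ε ≤ 1 → N * ε ^ p = 1 → j ≤ N / 2 →
      levelDensity N j - m₀ = ε * x → δ ≤ |ε * x| →
      |levelWeight J h N j / levelNormalizer J h m₀ N - rexp (-(d * x ^ p))| ≤
        K * ε * (1 + x ^ 2)⁻¹ := by
  obtain ⟨η, hη, hgap⟩ :=
    exists_gap_of_forall_lt isCompact_Icc (continuous_levelRate J h).continuousOn hmax hδ
  obtain ⟨A, hlimit⟩ := exists_exp_neg_le_of_le_abs hp hp0 hd hδ
  refine ⟨24 * π / η ^ 3 + A, fun {N j ε x} hε hε1 hNε hj hx hxδ => ?_⟩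
  have hN : N ≠ 0 := by
    rintro rfl
    simp at hNε
  have hm := levelDensity_mem_Icc hj
  have hweight : levelWeight J h N j / levelNormalizer J h m₀ N ≤
      24 * π / η ^ 3 * ε * (1 + x ^ 2)⁻¹ := by
    have hx1 : |ε * x| ≤ 1 := by
      rw [← hx, abs_le]
      constructor <;> linarith [hm.1, hm.2]
    have hinv : ((N : ℝ)⁻¹) ^ 2 ≤ ε * (2 * (1 + x ^ 2)⁻¹) := by
      rw [inv_eq_of_mul_eq_one_right hNε]
      exact sq_pow_le_mul_inv_one_add_sq hp hp0 hε hε1 hx1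
    calc levelWeight J h N j / levelNormalizer J h m₀ N
        ≤ 12 * π / η ^ 3 * ((N : ℝ)⁻¹) ^ 2 :=
          levelWeight_div_le_of_levelRate_add_le hm₀ hm₀' hη hN hj
            (hgap _ hm (by rwa [Real.dist_eq, hx]))
      _ ≤ 12 * π / η ^ 3 * (ε * (2 * (1 + x ^ 2)⁻¹)) := by gcongr
      _ = 24 * π / η ^ 3 * ε * (1 + x ^ 2)⁻¹ := by ring
  have hweight_pos := div_pos (levelWeight_pos J h N j) (levelNormalizer_pos J h m₀ N)
  calc |levelWeight J h N j / levelNormalizer J h m₀ N - rexp (-(d * x ^ p))|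
      ≤ levelWeight J h N j / levelNormalizer J h m₀ N + rexp (-(d * x ^ p)) := by
        rw [abs_le]
        constructor <;> linarith [exp_pos (-(d * x ^ p))]
    _ ≤ 24 * π / η ^ 3 * ε * (1 + x ^ 2)⁻¹ + A * ε * (1 + x ^ 2)⁻¹ :=
        add_le_add hweight (hlimit hε hxδ)
    _ = (24 * π / η ^ 3 + A) * ε * (1 + x ^ 2)⁻¹ := by ring

lemma exists_abs_levelWeight_div_sub_le (hm₀ : 0 < m₀) (hm₀' : m₀ < 1) (hp : Even p)
    (hp0 : p ≠ 0) (hd : 0 < d)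
    (hmax : ∀ m ∈ Set.Icc (0 : ℝ) 1, m ≠ m₀ → levelRate J h m < levelRate J h m₀)
    (hrate : HasLeadingTerm (fun m => levelRate J h m - levelRate J h m₀) m₀ p (-d)) :
    ∃ K ≥ 0, ∀ {N j : ℕ} {ε x : ℝ}, 0 < ε → ε ≤ 1 → N * ε ^ p = 1 → j ≤ N / 2 →
      levelDensity N j - m₀ = ε * x →
      |levelWeight J h N j / levelNormalizer J h m₀ N - rexp (-(d * x ^ p))| ≤
        K * ε * (1 + x ^ 2)⁻¹ := by
  obtain ⟨δ, hδ, K, hK, hnear⟩ := exists_near_abs_levelWeight_div_sub_le hm₀ hm₀' hp hp0 hd hrate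
  obtain ⟨K', hfar⟩ := exists_far_abs_levelWeight_div_sub_le hm₀ hm₀' hp hp0 hd hmax hδ
  refine ⟨max K K', le_max_of_le_left hK, fun {N j ε x} hε hε1 hNε hj hx => ?_⟩
  rcases lt_or_ge |ε * x| δ with hxδ | hxδ
  · refine (hnear hε hε1 hNε hj hx hxδ).trans ?_
    gcongr
    exact le_max_left K K'
  · refine (hfar hε hε1 hNε hj hx hxδ).trans ?_
    gcongr
    exact le_max_right K K'

end LocalLimit

section BerryEsseen

variable {J h m₀ d : ℝ} {p : ℕ}

lemma inv_natCast_mul_le_self {N : ℕ} {ε : ℝ} (hε : 0 < ε) (hε_one : ε ≤ 1) (hp : 2 ≤ p)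
    (hN : N * ε ^ p = 1) : (N * ε)⁻¹ ≤ ε := by
  have hN0 : (N : ℝ) ≠ 0 := left_ne_zero_of_mul_eq_one hN
  calc (N * ε)⁻¹ = N * ε ^ p * (N * ε)⁻¹ := by rw [hN, one_mul]
    _ ≤ N * ε ^ 2 * (N * ε)⁻¹ := by gcongr N * ?_ * _; exact pow_le_pow_of_le_one hε.le hε_one hp
    _ = ε := by field_simp

theorem exists_abs_probConf_sub_le (hm₀ : 0 < m₀) (hm₀' : m₀ < 1) (hp : Even p) (hp0 : p ≠ 0)
    (hd : 0 < d)
    (hmax : ∀ m ∈ Set.Icc (0 : ℝ) 1, m ≠ m₀ → levelRate J h m < levelRate J h m₀)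
    (hrate : HasLeadingTerm (fun m => levelRate J h m - levelRate J h m₀) m₀ p (-d)) :
    ∃ K, ∀ {N : ℕ} {ε : ℝ}, 0 < ε → ε ≤ 1 → N * ε ^ p = 1 → ∀ z,
      |probConf N J h (fun σ => ((Msum σ : ℝ) - N * m₀) / (N * ε) ≤ z) -
        (∫ t in Set.Iic z, rexp (-(d * t ^ p))) / ∫ t, rexp (-(d * t ^ p))| ≤ K * ε := by
  obtain ⟨B, hB, hlocal⟩ := exists_abs_levelWeight_div_sub_le hm₀ hm₀' hp hp0 hd hmax hrate
  obtain ⟨A, hf⟩ := exists_cauchyDominated_exp_neg hp hp0 hd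
  obtain ⟨K, hK⟩ := hf.exists_abs_sum_ite_div_sum_sub_le (integral_exp_pos hf.integrable) hB
    (lt_min hm₀ (sub_pos.mpr hm₀'))
  refine ⟨K, fun {N ε} hε hε_one hNε z => ?_⟩
  have hN : N ≠ 0 := fun h0 => by simp [h0] at hNε
  have hN' : (0 : ℝ) < N := by positivity
  have hmesh := inv_natCast_mul_le_self hε hε_one (Nat.le_of_dvd hp0.bot_lt hp.two_dvd) hNε
  have hscale (r : ℝ) : N * r / (N * ε) = r / ε := mul_div_mul_left _ _ hN'.ne'
  rw [probConf_eq_sum_levelWeight_div J h N fun M => ((M : ℝ) - N * m₀) / (N * ε) ≤ z]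
  refine hK (x := fun j => ((monomerLevel N j : ℝ) - N * m₀) / (N * ε)) (Δ := 2 * (N * ε)⁻¹) hε
    (by positivity) (by linarith) (by linarith) (levelNormalizer_pos J h m₀ N) (fun j => ?_)
    (levelWeight_pos J h N) (fun j hj => ?_) ?_ ?_ z
  · simp only [monomerLevel]
    push_cast
    ring
  · refine hlocal hε hε_one hNε hj ?_
    rw [← mul_levelDensity hN]
    field_simp
  · have hlevel : (monomerLevel N 0 : ℝ) ≤ 1 := by
      exact_mod_cast Nat.lt_succ_iff.mp (Nat.mod_lt N two_pos)
    calc ((monomerLevel N 0 : ℝ) - N * m₀) / (N * ε) ≤ (1 - N * m₀) / (N * ε) := by gcongr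
      _ = (N * ε)⁻¹ - m₀ / ε := by rw [sub_div, hscale, one_div]
      _ ≤ ε - min m₀ (1 - m₀) / ε := by gcongr; exact min_le_left _ _
  · have hlevel : monomerLevel N (N / 2) = N := by simpa using monomerLevel_add (le_refl (N / 2))
    rw [hlevel, ← mul_one_sub, hscale]
    gcongr
    exact min_le_right _ _

lemma eq_gFun_of_iteratedDeriv_Lone {k : ℕ} (hm₀ : m₀ ∈ Set.Icc (0 : ℝ) 1)
    (hzero : ∀ l ≤ 2 * k, iteratedDeriv l (Lone J h) m₀ = 0)
    (hpos : 0 < iteratedDeriv (2 * k + 1) (Lone J h) m₀) : m₀ = gFun (tauFun J h m₀) :=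
  eq_gFun_of_sq_eq hm₀.1 <| sq_eq_of_Lone_eq_zero J h
    (lt_one_of_iteratedDeriv_Lone hm₀.2 hzero hpos) (by simpa using hzero 0 (Nat.zero_le _))

lemma natCast_mul_inv_rpow_pow {N : ℕ} (hN : N ≠ 0) (k : ℕ) :
    N * ((N : ℝ) ^ (1 / (2 * (k : ℝ) + 2)))⁻¹ ^ (2 * k + 2) = 1 := by
  rw [inv_pow, ← Real.rpow_mul_natCast N.cast_nonneg]
  push_cast
  rw [one_div_mul_cancel (by positivity), Real.rpow_one, mul_inv_cancel₀ (by positivity)]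

lemma rpow_eq_natCast_mul_inv_rpow {N : ℕ} (hN : N ≠ 0) (k : ℕ) :
    (N : ℝ) ^ ((2 * (k : ℝ) + 1) / (2 * (k : ℝ) + 2)) =
      N * ((N : ℝ) ^ (1 / (2 * (k : ℝ) + 2)))⁻¹ := by
  have hexponent : (2 * (k : ℝ) + 1) / (2 * k + 2) = 1 - 1 / (2 * k + 2) := by
    field_simp
    ring
  rw [hexponent, Real.rpow_sub (by positivity), Real.rpow_one, div_eq_mul_inv]

theorem stmt11_general (J h : ℝ) (k : ℕ) {m₀ : ℝ} (hm₀ : m₀ ∈ Set.Icc (0 : ℝ) 1)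
    (hmax : ∀ m ∈ Set.Icc (0 : ℝ) 1, m ≠ m₀ → levelRate J h m < levelRate J h m₀)
    (hder0 : ∀ l ≤ 2 * k, iteratedDeriv l (Lone J h) m₀ = 0)
    (hderpos : 0 < iteratedDeriv (2 * k + 1) (Lone J h) m₀) :
    ∃ K : ℝ, ∀ N : ℕ, 1 ≤ N → ∀ z : ℝ,
      let d : ℝ := 2 * iteratedDeriv (2 * k + 1) (Lone J h) m₀ /
        ((2 * k + 2).factorial * Ltwo J h m₀)
      |probConf N J h
          (fun σ => ((Msum σ : ℝ) - N * m₀) / (N : ℝ) ^ ((2 * (k : ℝ) + 1) / (2 * k + 2)) ≤ z) -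
        (∫ t in Set.Iic z, rexp (-(d * t ^ (2 * k + 2)))) / ∫ t, rexp (-(d * t ^ (2 * k + 2)))| ≤
      K / (N : ℝ) ^ ((1 : ℝ) / (2 * k + 2)) := by
  have hzero : Lone J h m₀ = 0 := by simpa using hder0 0 (Nat.zero_le _)
  have hm₀_lt := lt_one_of_iteratedDeriv_Lone hm₀.2 hder0 hderpos
  have hm₀_pos := pos_of_Lone_eq_zero hm₀.1 hm₀_lt hzero
  have hLtwo : 0 < Ltwo J h m₀ := by
    rw [Ltwo_eq_four_mul_LoneCofactor J h (sq_eq_of_Lone_eq_zero J h hm₀_lt hzero)]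
    exact mul_pos four_pos (LoneCofactor_pos J h hm₀_pos hm₀_lt)
  have hrate := hasLeadingTerm_levelRate (q := 2 * k + 1) (by omega) hm₀_pos hm₀_lt
    fun l hl => hder0 l (by omega)
  obtain ⟨K, hK⟩ := exists_abs_probConf_sub_le hm₀_pos hm₀_lt (p := 2 * k + 2) ⟨k + 1, by ring⟩
    (by omega) (by positivity) hmax hrate
  refine ⟨K, fun N hN z => ?_⟩
  have hN0 : N ≠ 0 := by omega
  have hrpow : 1 ≤ (N : ℝ) ^ (1 / (2 * (k : ℝ) + 2)) :=
    Real.one_le_rpow (by exact_mod_cast hN) (by positivity)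
  rw [rpow_eq_natCast_mul_inv_rpow hN0, div_eq_mul_inv K]
  exact hK (by positivity) (inv_le_one_of_one_le₀ hrpow) (natCast_mul_inv_rpow_pow hN0 k) z

end BerryEsseen

/-- Berry–Esseen bound for the magnetization of the weighted
Curie–Weiss model: with `W = (M - N m₀)/N^{(2k+1)/(2k+2)}` and `Z` having density
`c₁ exp(-d z^{2k+2})`, `d = 2 L₁^{(2k+1)}(m₀)/((2k+2)! L₂(m₀))`, one has
`sup_z |ℙ(W ≤ z) - ℙ(Z ≤ z)| ≤ K N^{-1/(2k+2)}`. -/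
theorem stmt11 (J h : ℝ) (hJ : 0 ≤ J) (k : ℕ) (hk : k = 0 ∨ k = 1)
    (m₀ : ℝ) (hm₀ : m₀ ∈ Set.Icc (0:ℝ) 1)
    (hmax : ∀ m ∈ Set.Icc (0:ℝ) 1, ptilde J h m ≤ ptilde J h m₀)
    (huniq : ∀ m ∈ Set.Icc (0:ℝ) 1, ptilde J h m = ptilde J h m₀ → m = m₀)
    (hder0 : ∀ l : ℕ, l ≤ 2*k → iteratedDeriv l (Lone J h) m₀ = 0)
    (hderpos : 0 < iteratedDeriv (2*k+1) (Lone J h) m₀) :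
    ∃ K : ℝ, ∀ N : ℕ, 1 ≤ N → ∀ z : ℝ,
      let d : ℝ := 2 * iteratedDeriv (2*k+1) (Lone J h) m₀ /
        ((Nat.factorial (2*k+2) : ℝ) * Ltwo J h m₀)
      |probConf N J h
          (fun σ => ((Msum σ : ℝ) - N * m₀) / (N:ℝ) ^ ((2*(k:ℝ)+1)/(2*(k:ℝ)+2)) ≤ z)
        - (∫ t in Set.Iic z, Real.exp (-(d * t^(2*k+2)))) /
            ∫ t : ℝ, Real.exp (-(d * t^(2*k+2)))|
      ≤ K / (N:ℝ) ^ ((1:ℝ)/(2*(k:ℝ)+2)) := by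
  have hfix := eq_gFun_of_iteratedDeriv_Lone hm₀ hder0 hderpos
  exact stmt11_general J h k hm₀ (fun m hm hne => levelRate_lt_of_ptilde_lt J h hm hfix
    ((hmax m hm).lt_of_ne (hne ∘ huniq m hm))) hder0 hderpos
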